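/- arXiv:1412.8187 — 2 statements merged into one kernel-verified Lean document; each statement's English description precedes it below -/
import Mathlib

section
/- Let G be a finite group acting freely and continuously on a sphere S^{n} (i.e., there is a group homomorphism from G to the homeomorphism group of S^{n} such that every non-identity element of G acts without fixed points). Then for every prime p, every subgroup of G of order 2p is cyclic. -/
/-!
Both parts of the argument use mod `2` cohomology, in the form of cochains on lists of nearby points
(`D`, `sm`). This variant of Alexander–Spanier cohomology needs no singular chains or subdivision:
homotopy invariance comes from the prism operator, and Mayer–Vietoris (`mv_acyc`, `mv_oneDim`) from
extending a cochain by zero. By induction on the dimension, `sphere_cohomology` finds one class in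
the top degree and none elsewhere.

A free involution of a compact set has local sections with finitely many charts, and from them
`invAcyc_step` deduces that invariant cocycles above the top degree are coboundaries of invariant
cochains. This is the finite-dimensionality of the quotient, expressed without the quotient.

* `sphere_no_klein_four`: the Klein four-group does not act freely. The top power of the class of the
  double cover is a transfer from the trivial group, and a partial transfer is exact because
  homeomorphisms fix the mod `2` class; dividing by the class of the cover down to degree `0` gives
  `1 = 0`.
* `sphere_exists_comm`: a free involution `T` commutes with each homeomorphism `f` at some point.
  Otherwise `x ↦ (f x, T f T x)` is an equivariant map to the deleted product of the sphere with the
  involution `(a, b) ↦ (T b, T a)`. That involution has fixed points `(a, T a)`, while `T` has none,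
  and comparing the two forces the top class `f^* u` to vanish (`no_tower`).

In a group acting freely, the second result makes each involution central. A subgroup of order `2p`
with `p` odd then has commuting elements of orders `2` and `p`, and is cyclic. A noncyclic subgroup of
order `4` is a Klein four-group, excluded by the first result.
-/

/-- The group of self-homeomorphisms of a topological space,
with `(f * g) x = f (g x)`. -/
instance homeomorphGroup {X : Type*} [TopologicalSpace X] : Group (X ≃ₜ X) where
  mul f g := g.trans f
  one := Homeomorph.refl X
  inv := Homeomorph.symm
  mul_assoc _ _ _ := Homeomorph.ext fun _ => rfl
  one_mul _ := Homeomorph.ext fun _ => rfl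
  mul_one _ := Homeomorph.ext fun _ => rfl
  inv_mul_cancel f := Homeomorph.ext fun x => f.symm_apply_apply x

namespace Milnor
open Filter Topology Set

variable {α β γ : Type*}

/-! ### Cochains on lists -/

/-- The simplicial coboundary with coefficients in `ZMod 2`. A list of `m` points is an ordered
`(m - 1)`-simplex, and `D c l` is the sum of the values of `c` on the faces of `l`, obtained by
deleting one entry. The empty list is a `(-1)`-simplex, so the complex is the augmented one. A cochain
is a function on lists of all lengths, although only one length matters at a time. -/
def D : (List α → ZMod 2) → List α → ZMod 2
  | _, [] => 0
  | c, x :: l => c l + D (fun k => c (x :: k)) l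

/-- The pullback of a cochain along a map of the vertices. -/
def pull (f : α → β) (c : List β → ZMod 2) : List α → ZMod 2 := fun l => c (l.map f)

/-- The prism operator: the sum of the values of `c` on the simplices
`f x₀, …, f xᵢ, g xᵢ, …, g x_k`, a cochain homotopy between `pull f` and `pull g`. -/
def prism (f g : α → β) : (List β → ZMod 2) → List α → ZMod 2
  | _, [] => 0
  | c, x :: l => c (f x :: g x :: l.map g) + prism f g (fun k => c (f x :: k)) l

lemma two_mul_zero (a : ZMod 2) : a + a = 0 := CharTwo.add_self_eq_zero a

lemma D_add_apply (c c' : List α → ZMod 2) (l : List α) : D (c + c') l = D c l + D c' l := by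
  induction l generalizing c c' with
  | nil => simp [D]
  | cons x l ih =>
    have := ih (fun k => c (x :: k)) (fun k => c' (x :: k))
    simp only [D, Pi.add_apply] at *
    have h : (fun k => c (x :: k) + c' (x :: k)) =
      (fun k => c (x :: k)) + (fun k => c' (x :: k)) := rfl
    rw [h, this]; ring

lemma D_add (c c' : List α → ZMod 2) : D (c + c') = D c + D c' :=
  funext fun l => D_add_apply c c' l

lemma D_mul (a : ZMod 2) (c : List α → ZMod 2) (l : List α) :
    D (fun k => a * c k) l = a * D c l := by
  induction l generalizing c with
  | nil => simp [D]
  | cons x l ih => simp only [D, ih (fun k => c (x :: k))]; ring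

lemma D_zero : D (0 : List α → ZMod 2) = 0 := by
  funext l
  have := D_mul 0 (0 : List α → ZMod 2) l
  simp only [zero_mul] at this
  exact this

lemma D_D (c : List α → ZMod 2) : D (D c) = 0 := by
  funext l
  induction l generalizing c with
  | nil => simp [D]
  | cons x l ih =>
    have h : (fun k => D c (x :: k)) = c + D (fun k => c (x :: k)) := by
      funext k; simp [D]
    have := ih (fun k => c (x :: k))
    simp only [D, h, D_add_apply, Pi.zero_apply] at *
    grind

lemma D_pull (f : α → β) (c : List β → ZMod 2) : D (pull f c) = pull f (D c) := by
  funext l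
  induction l generalizing c with
  | nil => simp [D, pull]
  | cons x l ih =>
    have := ih (fun k => c (f x :: k))
    simp only [D, pull, List.map_cons] at *
    exact congrArg _ this

lemma pull_add (f : α → β) (c c' : List β → ZMod 2) : pull f (c + c') = pull f c + pull f c' := rfl

lemma prism_add (f g : α → β) (c c' : List β → ZMod 2) (l : List α) :
    prism f g (c + c') l = prism f g c l + prism f g c' l := by
  induction l generalizing c c' with
  | nil => simp [prism]
  | cons x l ih =>
    have := ih (fun k => c (f x :: k)) (fun k => c' (f x :: k))
    simp only [prism, Pi.add_apply] at *
    have h : (fun k => c (f x :: k) + c' (f x :: k)) =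
      (fun k => c (f x :: k)) + (fun k => c' (f x :: k)) := rfl
    rw [h, this]; ring

/-- The cochain homotopy identity of the prism operator. -/
lemma prism_homotopy (f g : α → β) (c : List β → ZMod 2) (l : List α) :
    D (prism f g c) l + prism f g (D c) l = pull f c l + pull g c l := by
  induction l generalizing c with
  | nil => simp [D, prism, pull, two_mul_zero]
  | cons x l ih =>
    have h1 : (fun k => prism f g c (x :: k)) =
        pull g (fun k => c (f x :: g x :: k)) + prism f g (fun k => c (f x :: k)) := by
      funext k; simp [prism, pull]
    have h2 : (fun k => D c (f x :: k)) = c + D (fun k => c (f x :: k)) := by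
      funext k; simp [D]
    have := ih (fun k => c (f x :: k))
    simp only [D, prism, pull, h1, h2, D_add_apply, prism_add, D_pull, List.map_cons] at *
    grind

lemma prism_eq_zero (f g : α → β) (c : List β → ZMod 2) (l : List α)
    (h : ∀ k : List β, k.length = l.length + 1 →
      (∀ y ∈ k, ∃ x ∈ l, y = f x ∨ y = g x) → c k = 0) : prism f g c l = 0 := by
  induction l generalizing c with
  | nil => rfl
  | cons x l ih =>
    simp only [prism]
    rw [h, ih, add_zero]
    · intro k hk hk'
      apply h
      · simp [hk]
      · intro y hy
        rcases List.mem_cons.1 hy with rfl | hy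
        · exact ⟨x, by simp, Or.inl rfl⟩
        · obtain ⟨z, hz, hz'⟩ := hk' y hy
          exact ⟨z, by simp [hz], hz'⟩
    · simp
    · intro y hy
      simp only [List.mem_cons, List.mem_map] at hy
      rcases hy with rfl | rfl | ⟨z, hz, rfl⟩
      · exact ⟨x, by simp, Or.inl rfl⟩
      · exact ⟨x, by simp, Or.inr rfl⟩
      · exact ⟨z, by simp [hz], Or.inr rfl⟩

lemma D_congr (c c' : List α → ZMod 2) (l : List α)
    (h : ∀ k : List α, k.length + 1 = l.length → (∀ x ∈ k, x ∈ l) → c k = c' k) :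
    D c l = D c' l := by
  induction l generalizing c c' with
  | nil => rfl
  | cons x l ih =>
    simp only [D]
    rw [h l (by simp) (by simp +contextual), ih]
    intro k hk hk'
    apply h
    · simp [hk]
    · intro y hy
      rcases List.mem_cons.1 hy with rfl | hy
      · simp
      · simp [hk' y hy]

lemma pull_id (c : List α → ZMod 2) : pull id c = c := by
  funext l; simp [pull]

lemma pull_pull (f : α → β) (g : β → γ) (c : List γ → ZMod 2) :
    pull f (pull g c) = pull (g ∘ f) c := by
  funext l; simp [pull]

lemma D_const (a : ZMod 2) (l : List α) : D (fun _ : List α => a) l = l.length * a := by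
  induction l with
  | nil => simp [D]
  | cons x l ih => simp only [D, ih, List.length_cons]; push_cast; ring

/-! ### Cochains on small simplices -/

variable [PseudoMetricSpace α] [PseudoMetricSpace β] [PseudoMetricSpace γ]

/-- All vertices lie in `S` and any two of them are at distance less than `ε`. -/
def Small (S : Set α) (ε : ℝ) (l : List α) : Prop :=
  (∀ x ∈ l, x ∈ S) ∧ ∀ x ∈ l, ∀ y ∈ l, dist x y < ε

lemma Small.sub {S : Set α} {ε : ℝ} {l k : List α} (h : Small S ε l) (hk : ∀ x ∈ k, x ∈ l) :
    Small S ε k := ⟨fun x hx => h.1 x (hk x hx), fun x hx y hy => h.2 x (hk x hx) y (hk y hy)⟩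

/-- The filter of small simplices with `m` vertices in `S`: its sets contain every `ε`-small list of
length `m` for some `ε > 0`. Equality of cochains along this filter is equality of
Alexander–Spanier-type cochains with a uniform size of simplices, as suits compact sets. -/
def sm (S : Set α) (m : ℕ) : Filter (List α) where
  sets := {s | ∃ ε > 0, ∀ l : List α, l.length = m → Small S ε l → l ∈ s}
  univ_sets := ⟨1, one_pos, fun _ _ _ => mem_univ _⟩
  sets_of_superset := fun ⟨ε, h, h'⟩ hst => ⟨ε, h, fun l hl hl' => hst (h' l hl hl')⟩
  inter_sets := fun ⟨ε, h, h'⟩ ⟨δ, k, k'⟩ => ⟨min ε δ, lt_min h k, fun l hl hl' =>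
    ⟨h' l hl ⟨hl'.1, fun x hx y hy => (hl'.2 x hx y hy).trans_le (min_le_left _ _)⟩,
      k' l hl ⟨hl'.1, fun x hx y hy => (hl'.2 x hx y hy).trans_le (min_le_right _ _)⟩⟩⟩

lemma ev_sm {S : Set α} {m : ℕ} {P : List α → Prop} : (∀ᶠ l in sm S m, P l) ↔
    ∃ ε > 0, ∀ l : List α, l.length = m → Small S ε l → P l := Iff.rfl

lemma ev_eq {S : Set α} {m : ℕ} {c c' : List α → ZMod 2} : c =ᶠ[sm S m] c' ↔
    ∃ ε > 0, ∀ l : List α, l.length = m → Small S ε l → c l = c' l := Iff.rfl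

lemma ev_length (S : Set α) (m : ℕ) : ∀ᶠ l in sm S m, l.length = m ∧ ∀ x ∈ l, x ∈ S :=
  ⟨1, one_pos, fun _ h h' => ⟨h, h'.1⟩⟩

lemma sm_mono {S S' : Set α} (h : S ⊆ S') (m : ℕ) : sm S m ≤ sm S' m := by
  rintro s ⟨ε, hε, H⟩
  exact ⟨ε, hε, fun l hl hl' => H l hl ⟨fun x hx => h (hl'.1 x hx), hl'.2⟩⟩

lemma tendsto_map {S : Set α} {S' : Set β} {f : α → β} (hf : UniformContinuousOn f S)
    (hm : MapsTo f S S') (m : ℕ) : Tendsto (List.map f) (sm S m) (sm S' m) := by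
  rintro s ⟨ε, hε, H⟩
  obtain ⟨δ, hδ, h⟩ := Metric.uniformContinuousOn_iff.1 hf ε hε
  refine ⟨δ, hδ, fun l hl hl' => H _ (by simpa using hl) ⟨?_, ?_⟩⟩
  · simp only [List.mem_map]
    rintro _ ⟨x, hx, rfl⟩
    exact hm (hl'.1 x hx)
  · simp only [List.mem_map]
    rintro _ ⟨x, hx, rfl⟩ _ ⟨y, hy, rfl⟩
    exact h x (hl'.1 x hx) y (hl'.1 y hy) (hl'.2 x hx y hy)

lemma ev_D {S : Set α} {m : ℕ} {c c' : List α → ZMod 2} (h : c =ᶠ[sm S m] c') :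
    D c =ᶠ[sm S (m + 1)] D c' := by
  obtain ⟨ε, hε, h⟩ := h
  refine ⟨ε, hε, fun l hl hl' => D_congr _ _ _ fun k hk hk' => h k (by omega) (hl'.sub hk')⟩

lemma ev_pull {S : Set α} {S' : Set β} {f : α → β} (hf : UniformContinuousOn f S)
    (hm : MapsTo f S S') {m : ℕ} {c c' : List β → ZMod 2} (h : c =ᶠ[sm S' m] c') :
    pull f c =ᶠ[sm S m] pull f c' := (tendsto_map hf hm m).eventually h

/-- Every cocycle on the small simplices with `m` vertices in `S` is a coboundary. The reduced
cohomology of `S` in degree `m - 1` vanishes. -/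
def Acyc (S : Set α) (m : ℕ) : Prop :=
  ∀ c : List α → ZMod 2, D c =ᶠ[sm S (m + 1)] 0 → ∃ b, c =ᶠ[sm S m] D b

/-- The reduced mod `2` cohomology of `S` in degree `m - 1` has exactly one nonzero class: there is
a cocycle that is not a coboundary, and any two such differ by a coboundary. -/
def OneDim (S : Set α) (m : ℕ) : Prop :=
  (∃ c : List α → ZMod 2, D c =ᶠ[sm S (m + 1)] 0 ∧ ¬ ∃ b, c =ᶠ[sm S m] D b) ∧
  ∀ c c' : List α → ZMod 2, D c =ᶠ[sm S (m + 1)] 0 → D c' =ᶠ[sm S (m + 1)] 0 →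
    (¬ ∃ b, c =ᶠ[sm S m] D b) → (¬ ∃ b, c' =ᶠ[sm S m] D b) → ∃ b, c + c' =ᶠ[sm S m] D b

/-- Maps that are close enough compared to the scale of a cocycle pull it back to the same class. -/
lemma homotopy_step {S : Set α} {S' : Set β} {m : ℕ} (c : List β → ZMod 2) {ε : ℝ}
    (hc : ∀ l : List β, l.length = m + 1 → Small S' ε l → D c l = 0) {f g : α → β}
    (hf : MapsTo f S S') (hg : MapsTo g S S') {δ : ℝ} (hδ : 0 < δ)
    (hff : ∀ x ∈ S, ∀ y ∈ S, dist x y < δ → dist (f x) (f y) < ε)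
    (hfg : ∀ x ∈ S, ∀ y ∈ S, dist x y < δ → dist (f x) (g y) < ε)
    (hgg : ∀ x ∈ S, ∀ y ∈ S, dist x y < δ → dist (g x) (g y) < ε) :
    ∃ b, pull f c + pull g c =ᶠ[sm S m] D b := by
  refine ⟨prism f g c, δ, hδ, fun l hl hl' => ?_⟩
  have := prism_homotopy f g c l
  rw [prism_eq_zero f g (D c) l, add_zero] at this
  · exact this.symm
  · intro k hk hk'
    refine hc k (by omega) ⟨?_, ?_⟩
    · intro y hy
      obtain ⟨x, hx, rfl | rfl⟩ := hk' y hy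
      · exact hf (hl'.1 x hx)
      · exact hg (hl'.1 x hx)
    · intro y hy y' hy'
      obtain ⟨x, hx, h⟩ := hk' y hy
      obtain ⟨x', hx', h'⟩ := hk' y' hy'
      have h1 := hl'.1 x hx
      have h2 := hl'.1 x' hx'
      have h3 := hl'.2 x hx x' hx'
      rcases h with rfl | rfl <;> rcases h' with rfl | rfl
      · exact hff _ h1 _ h2 h3
      · exact hfg _ h1 _ h2 h3
      · rw [dist_comm]; exact hfg _ h2 _ h1 (by rwa [dist_comm])
      · exact hgg _ h1 _ h2 h3

/-- Homotopy invariance: the time interval is cut into pieces short enough for `homotopy_step`. The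
target `S'` need not be compact; the cocycle condition on `S'` supplies the scale. -/
lemma homotopy {S : Set α} {S' : Set β} {m : ℕ} (c : List β → ZMod 2)
    (hc : D c =ᶠ[sm S' (m + 1)] 0) (hS : IsCompact S) (F : ℝ → α → β)
    (hF : ContinuousOn (fun p : ℝ × α => F p.1 p.2) (Icc 0 1 ×ˢ S))
    (hm : ∀ t ∈ Icc (0 : ℝ) 1, MapsTo (F t) S S') :
    ∃ b, pull (F 0) c + pull (F 1) c =ᶠ[sm S m] D b := by
  obtain ⟨ε, hε, hc⟩ := hc
  have hu := (isCompact_Icc.prod hS).uniformContinuousOn_of_continuous hF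
  obtain ⟨δ, hδ, h⟩ := Metric.uniformContinuousOn_iff.1 hu ε hε
  obtain ⟨N, hN⟩ := exists_nat_one_div_lt hδ
  have key : ∀ k : ℕ, k ≤ N + 1 →
      ∃ b, pull (F 0) c + pull (F (k / (N + 1 : ℝ))) c =ᶠ[sm S m] D b := by
    intro k
    induction k with
    | zero =>
      intro _
      refine ⟨0, Eventually.of_forall fun l => ?_⟩
      simp [D_zero, two_mul_zero]
    | succ k ih =>
      intro hk
      obtain ⟨b, hb⟩ := ih (by omega)
      have hN0 : (0 : ℝ) < N + 1 := by positivity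
      have hk1 : (k : ℝ) + 1 ≤ N + 1 := by exact_mod_cast hk
      have m1 : (k / (N + 1 : ℝ)) ∈ Icc (0 : ℝ) 1 :=
        ⟨by positivity, by rw [div_le_one hN0]; linarith⟩
      have m2 : ((k + 1 : ℕ) / (N + 1 : ℝ)) ∈ Icc (0 : ℝ) 1 :=
        ⟨by positivity, by rw [div_le_one hN0]; push_cast; linarith⟩
      have hd : dist (k / (N + 1 : ℝ)) ((k + 1 : ℕ) / (N + 1 : ℝ)) < δ := by
        rw [dist_comm, Real.dist_eq]
        have : ((k + 1 : ℕ) / (N + 1 : ℝ)) - k / (N + 1 : ℝ) = 1 / (N + 1) := by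
          push_cast; ring
        rw [this, abs_of_pos (by positivity)]; exact hN
      have gen : ∀ s ∈ Icc (0 : ℝ) 1, ∀ t ∈ Icc (0 : ℝ) 1, dist s t < δ →
          ∀ x ∈ S, ∀ y ∈ S, dist x y < δ → dist (F s x) (F t y) < ε := by
        intro s hs t ht hst x hx y hy hxy
        exact h (s, x) ⟨hs, hx⟩ (t, y) ⟨ht, hy⟩ (by rw [Prod.dist_eq]; exact max_lt hst hxy)
      obtain ⟨b', hb'⟩ := homotopy_step c hc (hm _ m1) (hm _ m2) hδ
        (gen _ m1 _ m1 (by simpa using hδ)) (gen _ m1 _ m2 hd) (gen _ m2 _ m2 (by simpa using hδ))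
      refine ⟨b + b', ?_⟩
      filter_upwards [hb, hb'] with l h1 h2
      simp only [Pi.add_apply, D_add] at *
      rw [← h1, ← h2]; grind
  obtain ⟨b, hb⟩ := key (N + 1) le_rfl
  have : (((N + 1 : ℕ) : ℝ) / (N + 1 : ℝ)) = 1 := by
    push_cast; exact div_self (by positivity)
  rw [this] at hb
  exact ⟨b, hb⟩

/-! ### Homotopy invariance and Mayer–Vietoris -/

omit [PseudoMetricSpace β] in
lemma pull_congr {S : Set α} {f g : α → β} (h : EqOn f g S) (c : List β → ZMod 2) (m : ℕ) :
    pull f c =ᶠ[sm S m] pull g c := by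
  filter_upwards [ev_length S m] with l hl
  simp only [pull]
  congr 1
  exact List.map_congr_left fun x hx => h (hl.2 x hx)

/-- A compact set contractible in itself has no reduced cohomology; what remains after the
contraction is a cochain with constant value, treated by `D_const`. -/
lemma acyc_of_contract {S : Set α} (hS : IsCompact S) (p : α) (hp : p ∈ S) (F : ℝ → α → α)
    (hF : ContinuousOn (fun p : ℝ × α => F p.1 p.2) (Icc 0 1 ×ˢ S))
    (hm : ∀ t ∈ Icc (0 : ℝ) 1, MapsTo (F t) S S) (h0 : ∀ x ∈ S, F 0 x = x)
    (h1 : ∀ x ∈ S, F 1 x = p) (m : ℕ) : Acyc S m := by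
  intro c hc
  obtain ⟨b, hb⟩ := homotopy c hc hS F hF hm
  obtain ⟨ε, hε, hc⟩ := ev_eq.1 hc
  have h2 : ((m + 1 : ℕ) : ZMod 2) * c (List.replicate m p) = 0 := by
    have h3 : (0 : List α → ZMod 2) (List.replicate (m + 1) p) = 0 := rfl
    rw [← h3, ← hc (List.replicate (m + 1) p) (by simp) ⟨?_, ?_⟩,
      D_congr c (fun _ => c (List.replicate m p)), D_const, List.length_replicate]
    · intro k hk hk'
      congr 1
      rw [List.eq_replicate_iff]
      simp only [List.length_replicate] at hk
      exact ⟨by omega, fun y hy => List.eq_of_mem_replicate (hk' y hy)⟩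
    · intro x hx; rw [List.eq_of_mem_replicate hx]; exact hp
    · intro x hx y hy
      rw [List.eq_of_mem_replicate hx, List.eq_of_mem_replicate hy]; simpa using hε
  refine ⟨b + fun _ => c (List.replicate m p), ?_⟩
  filter_upwards [hb, ev_length S m, pull_congr (g := id) h0 c m,
    pull_congr (g := fun _ => p) h1 c m] with l e1 e2 e3 e4
  rw [pull_id] at e3
  simp only [Pi.add_apply, D_add, D_const] at e1 ⊢
  rw [e3, e4] at e1
  rw [← e1, e2.1]
  simp only [pull, List.map_const', e2.1]
  push_cast at h2
  generalize c (List.replicate m p) = a at *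
  generalize c l = a at *
  grind

lemma ev_add {S : Set α} {m : ℕ} {c c' d d' : List α → ZMod 2} (h : c =ᶠ[sm S m] c')
    (hd : d =ᶠ[sm S m] d') : c + d =ᶠ[sm S m] c' + d' := h.add hd

/-- If the inclusion of `S` into `S₁` is homotopic to `g ∘ f`, where `f` maps `S` into `S'`, then a
cocycle on `S₁` whose pullback along `g` is exact on `S'` is exact on `S`. -/
lemma exact_of_deform {S : Set α} {S' : Set β} (hS : IsCompact S)
    {f : α → β} {g : β → α} (hf : UniformContinuousOn f S) (hf' : MapsTo f S S')
    (F : ℝ → α → α) (hF : ContinuousOn (fun p : ℝ × α => F p.1 p.2) (Icc 0 1 ×ˢ S))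
    {S₁ : Set α} (hm : ∀ t ∈ Icc (0 : ℝ) 1, MapsTo (F t) S S₁) (h0 : ∀ x ∈ S, F 0 x = x)
    (h1 : ∀ x ∈ S, F 1 x = g (f x)) {m : ℕ} {c : List α → ZMod 2}
    (hc : D c =ᶠ[sm S₁ (m + 1)] 0) (he : ∃ b, pull g c =ᶠ[sm S' m] D b) :
    ∃ b, c =ᶠ[sm S m] D b := by
  obtain ⟨b, hb⟩ := homotopy c hc hS F hF hm
  obtain ⟨b', hb'⟩ := he
  have := ev_pull hf hf' hb'
  refine ⟨b + pull f b', ?_⟩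
  filter_upwards [hb, pull_congr (g := id) h0 c m, pull_congr (g := g ∘ f) h1 c m, this]
    with l e1 e2 e3 e4
  rw [pull_id] at e2
  rw [pull_pull] at e4
  simp only [Pi.add_apply, D_add, D_pull] at *
  grind

lemma acyc_of_deform {S : Set α} {S' : Set β} (hS : IsCompact S)
    {f : α → β} {g : β → α} (hf : UniformContinuousOn f S) (hf' : MapsTo f S S')
    (hg : UniformContinuousOn g S') (hg' : MapsTo g S' S)
    (F : ℝ → α → α) (hF : ContinuousOn (fun p : ℝ × α => F p.1 p.2) (Icc 0 1 ×ˢ S))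
    (hm : ∀ t ∈ Icc (0 : ℝ) 1, MapsTo (F t) S S) (h0 : ∀ x ∈ S, F 0 x = x)
    (h1 : ∀ x ∈ S, F 1 x = g (f x)) {m : ℕ} (h : Acyc S' m) : Acyc S m := by
  intro c hc
  refine exact_of_deform hS hf hf' F hF hm h0 h1 hc (h _ ?_)
  have := ev_pull hg hg' hc
  rw [D_pull]; exact this

lemma oneDim_of_deform {S : Set α} {S' : Set β} (hS : IsCompact S)
    {f : α → β} {g : β → α} (hf : UniformContinuousOn f S) (hf' : MapsTo f S S')
    (hg : UniformContinuousOn g S') (hg' : MapsTo g S' S)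
    (F : ℝ → α → α) (hF : ContinuousOn (fun p : ℝ × α => F p.1 p.2) (Icc 0 1 ×ˢ S))
    (hm : ∀ t ∈ Icc (0 : ℝ) 1, MapsTo (F t) S S) (h0 : ∀ x ∈ S, F 0 x = x)
    (h1 : ∀ x ∈ S, F 1 x = g (f x)) (h2 : ∀ y ∈ S', f (g y) = y) {m : ℕ}
    (h : OneDim S' m) : OneDim S m := by
  obtain ⟨⟨u, hu, hu'⟩, hd⟩ := h
  constructor
  · refine ⟨pull f u, ?_, fun ⟨b, hb⟩ => hu' ⟨pull g b, ?_⟩⟩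
    · rw [D_pull]; exact ev_pull hf hf' hu
    · have e1 := ev_pull hg hg' hb
      rw [pull_pull, ← D_pull] at e1
      have e2 := pull_congr (g := id) (f := f ∘ g) h2 u m
      rw [pull_id] at e2
      exact e2.symm.trans e1
  · intro c c' hc hc' hn hn'
    refine exact_of_deform hS hf hf' F hF hm h0 h1 (m := m) (c := c + c') ?_ ?_
    · rw [D_add]
      filter_upwards [hc, hc'] with l e1 e2
      simp [e1, e2]
    · rw [pull_add]
      apply hd
      · rw [D_pull]; exact ev_pull hg hg' hc
      · rw [D_pull]; exact ev_pull hg hg' hc'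
      · exact fun h => hn (exact_of_deform hS hf hf' F hF hm h0 h1 hc h)
      · exact fun h => hn' (exact_of_deform hS hf hf' F hF hm h0 h1 hc' h)

/-- A cocycle on `A ∪ B` with `A`, `B` acyclic yields a cocycle on `A ∩ B` of one degree less. -/
lemma mv_split {A B : Set α} (hA : ∀ m, Acyc A m) (hB : ∀ m, Acyc B m) {m : ℕ} {c : List α → ZMod 2}
    (hc : D c =ᶠ[sm (A ∪ B) (m + 1 + 1)] 0) :
    ∃ a b, c =ᶠ[sm A (m + 1)] D a ∧ c =ᶠ[sm B (m + 1)] D b ∧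
      D (a + b) =ᶠ[sm (A ∩ B) (m + 1)] 0 := by
  obtain ⟨a, ha⟩ := hA (m + 1) c (hc.filter_mono (sm_mono subset_union_left _))
  obtain ⟨b, hb⟩ := hB (m + 1) c (hc.filter_mono (sm_mono subset_union_right _))
  refine ⟨a, b, ha, hb, ?_⟩
  filter_upwards [ha.filter_mono (sm_mono inter_subset_left _),
    hb.filter_mono (sm_mono inter_subset_right _)] with l h1 h2
  rw [D_add, Pi.add_apply, ← h1, ← h2, two_mul_zero]; rfl

section MV

-- `hL` says that small simplices of the union lie in one of the two sets.
variable {A B : Set α} (hL : ∃ ε > 0, ∀ l : List α, Small (A ∪ B) ε l →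
  (∀ x ∈ l, x ∈ A) ∨ (∀ x ∈ l, x ∈ B))
include hL

/-- Injectivity of the connecting map of Mayer–Vietoris: if the cocycle `a + b` on the intersection is
exact, so is `c` on the union. -/
lemma mv_exact {m : ℕ} {c a b : List α → ZMod 2} (ha : c =ᶠ[sm A (m + 1)] D a)
    (hb : c =ᶠ[sm B (m + 1)] D b) (he : ∃ e, a + b =ᶠ[sm (A ∩ B) m] D e) :
    ∃ g, c =ᶠ[sm (A ∪ B) (m + 1)] D g := by
  classical
  obtain ⟨e, he⟩ := he
  obtain ⟨ε₀, hε₀, hL⟩ := hL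
  obtain ⟨ε₁, hε₁, ha⟩ := ev_eq.1 ha
  obtain ⟨ε₂, hε₂, hb⟩ := ev_eq.1 hb
  obtain ⟨ε₃, hε₃, he⟩ := ev_eq.1 he
  refine ⟨fun l => if ∀ x ∈ l, x ∈ A then (a + D e) l else b l,
    ev_eq.2 ⟨min (min ε₀ ε₁) (min ε₂ ε₃), by positivity, fun l hl hl' => ?_⟩⟩
  have hlt : ∀ x ∈ l, ∀ y ∈ l, dist x y < ε₀ ∧ dist x y < ε₁ ∧ dist x y < ε₂ ∧ dist x y < ε₃ := by
    intro x hx y hy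
    have := hl'.2 x hx y hy
    simp only [lt_min_iff] at this
    tauto
  rcases hL l ⟨hl'.1, fun x hx y hy => (hlt x hx y hy).1⟩ with h | h
  · rw [ha l hl ⟨h, fun x hx y hy => (hlt x hx y hy).2.1⟩]
    symm
    rw [D_congr _ (a + D e), D_add, D_D, add_zero]
    intro k hk hk'
    exact if_pos fun x hx => h x (hk' x hx)
  · rw [hb l hl ⟨h, fun x hx y hy => (hlt x hx y hy).2.2.1⟩]
    symm
    rw [D_congr _ b]
    intro k hk hk'
    split_ifs with hA
    · have : (a + b) k = D e k := he k (by omega)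
        ⟨fun x hx => ⟨hA x hx, h x (hk' x hx)⟩,
          fun x hx y hy => (hlt x (hk' x hx) y (hk' y hy)).2.2.2⟩
      simp only [Pi.add_apply] at *
      grind
    · rfl

lemma mv_acyc (hA : ∀ m, Acyc A m) (hB : ∀ m, Acyc B m) {m : ℕ} (h : Acyc (A ∩ B) m) :
    Acyc (A ∪ B) (m + 1) := by
  intro c hc
  obtain ⟨a, b, ha, hb, hab⟩ := mv_split hA hB hc
  exact mv_exact hL ha hb (h _ hab)

lemma mv_oneDim (hA : ∀ m, Acyc A m) (hB : ∀ m, Acyc B m) {m : ℕ} (h : OneDim (A ∩ B) m) :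
    OneDim (A ∪ B) (m + 1) := by
  classical
  obtain ⟨⟨u, hu, hu'⟩, hd⟩ := h
  constructor
  · have hcA : (fun l => if ∀ x ∈ l, x ∈ A then D u l else 0) =ᶠ[sm A (m + 1)] D u := by
      filter_upwards [ev_length A (m + 1)] with l hl
      exact if_pos hl.2
    have hcB : (fun l => if ∀ x ∈ l, x ∈ A then D u l else 0) =ᶠ[sm B (m + 1)] 0 := by
      obtain ⟨ε, hε, hu⟩ := ev_eq.1 hu
      refine ev_eq.2 ⟨ε, hε, fun l hl hl' => ?_⟩
      split_ifs with h
      · exact hu l hl ⟨fun x hx => ⟨h x hx, hl'.1 x hx⟩, hl'.2⟩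
      · rfl
    -- The image of `u` under the connecting map is `D u` on the simplices of `A` and `0` elsewhere.
    refine ⟨fun l => if ∀ x ∈ l, x ∈ A then D u l else 0, ?_, ?_⟩
    · have h1 := ev_D hcA
      have h2 := ev_D hcB
      rw [D_D] at h1
      rw [D_zero] at h2
      obtain ⟨ε₀, hε₀, hL⟩ := hL
      obtain ⟨ε₁, hε₁, h1⟩ := h1
      obtain ⟨ε₂, hε₂, h2⟩ := h2
      refine ⟨min ε₀ (min ε₁ ε₂), by positivity, fun l hl hl' => ?_⟩
      have hlt : ∀ x ∈ l, ∀ y ∈ l, dist x y < ε₀ ∧ dist x y < ε₁ ∧ dist x y < ε₂ := by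
        intro x hx y hy
        have := hl'.2 x hx y hy
        simp only [lt_min_iff] at this
        tauto
      rcases hL l ⟨hl'.1, fun x hx y hy => (hlt x hx y hy).1⟩ with h | h
      · exact h1 l hl ⟨h, fun x hx y hy => (hlt x hx y hy).2.1⟩
      · exact h2 l hl ⟨h, fun x hx y hy => (hlt x hx y hy).2.2⟩
    · rintro ⟨g, hg⟩
      have h1 := hcA.symm.trans (hg.filter_mono (sm_mono subset_union_left _))
      have h2 := hcB.symm.trans (hg.filter_mono (sm_mono subset_union_right _))
      obtain ⟨e₁, he₁⟩ := hA m (u + g) (by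
        filter_upwards [h1] with l hl
        rw [D_add, Pi.add_apply, hl, two_mul_zero]; rfl)
      obtain ⟨e₂, he₂⟩ := hB m g h2.symm
      refine hu' ⟨e₁ + e₂, ?_⟩
      filter_upwards [he₁.filter_mono (sm_mono inter_subset_left _),
        he₂.filter_mono (sm_mono inter_subset_right _)] with l h1 h2
      simp only [D_add, Pi.add_apply] at *
      grind
  · intro c c' hc hc' hn hn'
    obtain ⟨a, b, ha, hb, hab⟩ := mv_split hA hB hc
    obtain ⟨a', b', ha', hb', hab'⟩ := mv_split hA hB hc'
    obtain ⟨e, he⟩ := hd (a + b) (a' + b') hab hab' (fun h => hn (mv_exact hL ha hb h))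
      (fun h => hn' (mv_exact hL ha' hb' h))
    refine mv_exact hL (a := a + a') (b := b + b') ?_ ?_ ⟨e, ?_⟩
    · rw [D_add]; exact ev_add ha ha'
    · rw [D_add]; exact ev_add hb hb'
    · rw [add_add_add_comm]; exact he

end MV

/-! ### Cohomology of the sphere -/

section Sphere

variable {V : Type*} [NormedAddCommGroup V] [InnerProductSpace ℝ V] [FiniteDimensional ℝ V]

open RealInnerProductSpace

/-- The radial projection to the unit sphere; the junk value at `0` is `0`. -/
noncomputable def nrm (x : V) : V := ‖x‖⁻¹ • x

omit [FiniteDimensional ℝ V] in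
lemma norm_nrm {x : V} (hx : x ≠ 0) : ‖nrm x‖ = 1 := by
  simp [nrm, norm_smul, hx]

omit [FiniteDimensional ℝ V] in
lemma nrm_of_norm {x : V} (hx : ‖x‖ = 1) : nrm x = x := by
  simp [nrm, hx]

omit [FiniteDimensional ℝ V] in
lemma continuousOn_nrm {X : Type*} [TopologicalSpace X] {f : X → V} {s : Set X}
    (hf : ContinuousOn f s) (h : ∀ x ∈ s, f x ≠ 0) : ContinuousOn (fun x => nrm (f x)) s :=
  (hf.norm.inv₀ fun x hx => norm_ne_zero_iff.2 (h x hx)).smul hf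

/-- The unit sphere of a subspace `W`. -/
def SW (W : Submodule ℝ V) : Set V := {x | x ∈ W ∧ ‖x‖ = 1}

lemma isClosed_SW (W : Submodule ℝ V) : IsClosed (SW W) :=
  W.closed_of_finiteDimensional.inter (isClosed_eq continuous_norm continuous_const)

lemma isCompact_SW (W : Submodule ℝ V) : IsCompact (SW W) :=
  (isCompact_sphere (0 : V) 1).of_isClosed_subset (isClosed_SW W) fun x hx => by simpa using hx.2

/-- The part of the unit sphere of `W` on which the inner product with `e` is at least `-1/2`. The caps
around `e` and `-e` overlap in a band around the equator. -/
def cap (W : Submodule ℝ V) (e : V) : Set V := SW W ∩ {x | -(1 / 2) ≤ ⟪e, x⟫}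

lemma isCompact_cap (W : Submodule ℝ V) (e : V) : IsCompact (cap W e) :=
  (isCompact_SW W).inter_right (isClosed_le continuous_const (by fun_prop))

/-- A cap contracts to its centre along normalized segments. -/
lemma cap_acyc (W : Submodule ℝ V) {e : V} (he : e ∈ SW W) (m : ℕ) : Acyc (cap W e) m := by
  have key : ∀ t ∈ Icc (0 : ℝ) 1, ∀ x ∈ cap W e,
      -(1 / 2) * ‖(1 - t) • x + t • e‖ ≤ ⟪e, (1 - t) • x + t • e⟫ ∧ (1 - t) • x + t • e ≠ 0 := by
    rintro t ⟨ht0, ht1⟩ x ⟨⟨hxW, hx⟩, hxe⟩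
    have hxe : -(1 / 2) ≤ ⟪e, x⟫ := hxe
    have h1 : ⟪e, (1 - t) • x + t • e⟫ = (1 - t) * ⟪e, x⟫ + t := by
      rw [inner_add_right, inner_smul_right, inner_smul_right, real_inner_self_eq_norm_sq, he.2]
      ring
    have h2 : (1 - t) - t ≤ ‖(1 - t) • x + t • e‖ := by
      have := norm_sub_le_norm_add ((1 - t) • x) (t • e)
      rw [norm_smul, norm_smul, hx, he.2, Real.norm_of_nonneg ht0,
        Real.norm_of_nonneg (by linarith)] at this
      linarith
    have h3 : (1 - t) * ⟪e, x⟫ ≥ (1 - t) * (-(1 / 2)) :=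
      mul_le_mul_of_nonneg_left hxe (by linarith)
    refine ⟨by rw [h1]; linarith, fun h => ?_⟩
    rw [h, inner_zero_right] at h1
    rw [h, norm_zero] at h2
    linarith
  refine acyc_of_contract (isCompact_cap W e) e ⟨he, ?_⟩
    (fun t x => nrm ((1 - t) • x + t • e)) ?_ ?_ ?_ ?_ m
  · show -(1 / 2) ≤ ⟪e, e⟫
    rw [real_inner_self_eq_norm_sq, he.2]; norm_num
  · refine continuousOn_nrm (by fun_prop) ?_
    rintro ⟨t, x⟩ ⟨ht, hx⟩
    exact (key t ht x hx).2
  · intro t ht x hx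
    obtain ⟨h1, h2⟩ := key t ht x hx
    refine ⟨⟨W.smul_mem _ (W.add_mem (W.smul_mem _ hx.1.1) (W.smul_mem _ he.1)), norm_nrm h2⟩, ?_⟩
    have hp := norm_pos_iff.2 h2
    change -(1 / 2) ≤ ⟪e, ‖(1 - t) • x + t • e‖⁻¹ • ((1 - t) • x + t • e)⟫
    rw [inner_smul_right, ← div_eq_inv_mul, le_div_iff₀ hp]
    exact h1
  · intro x hx; simp [nrm_of_norm hx.1.2]
  · intro x hx; simp [nrm_of_norm he.2]

omit [FiniteDimensional ℝ V] in
/-- The two caps cover the sphere, and simplices of size less than `1` lie in one of them, which is what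
Mayer–Vietoris asks for. -/
lemma cap_cover (W : Submodule ℝ V) {e : V} (he : e ∈ SW W) :
    cap W e ∪ cap W (-e) = SW W ∧ ∃ ε > 0, ∀ l : List V, Small (cap W e ∪ cap W (-e)) ε l →
      (∀ x ∈ l, x ∈ cap W e) ∨ (∀ x ∈ l, x ∈ cap W (-e)) := by
  have h : cap W e ∪ cap W (-e) = SW W := by
    refine subset_antisymm (union_subset inter_subset_left inter_subset_left) fun x hx => ?_
    by_cases h : -(1 / 2) ≤ ⟪e, x⟫
    · exact Or.inl ⟨hx, h⟩
    · refine Or.inr ⟨hx, ?_⟩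
      simp only [mem_ofPred_eq, inner_neg_left]
      linarith
  refine ⟨h, 1, one_pos, fun l hl => ?_⟩
  rw [h] at hl
  by_contra! hc
  obtain ⟨⟨x, hx, hx'⟩, ⟨y, hy, hy'⟩⟩ := hc
  have hx2 : ⟪e, x⟫ < -(1 / 2) := by
    by_contra! hh; exact hx' ⟨hl.1 x hx, hh⟩
  have hy2 : 1 / 2 < ⟪e, y⟫ := by
    by_contra! hh
    refine hy' ⟨hl.1 y hy, ?_⟩
    simp only [mem_ofPred_eq, inner_neg_left]
    linarith
  have h1 := hl.2 y hy x hx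
  have h2 : ⟪e, y - x⟫ ≤ ‖e‖ * ‖y - x‖ := real_inner_le_norm _ _
  rw [he.2, inner_sub_right, ← dist_eq_norm] at h2
  linarith

/-- The band deforms to the equator, the unit sphere of the orthogonal complement of `e` in `W`. -/
lemma band_deform (W : Submodule ℝ V) {e : V} (he : e ∈ SW W) (m : ℕ) :
    (Acyc (SW ((ℝ ∙ e)ᗮ ⊓ W)) m → Acyc (cap W e ∩ cap W (-e)) m) ∧
    (OneDim (SW ((ℝ ∙ e)ᗮ ⊓ W)) m → OneDim (cap W e ∩ cap W (-e)) m) := by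
  have hcomp : IsCompact (cap W e ∩ cap W (-e)) :=
    (isCompact_cap W e).inter (isCompact_cap W (-e))
  have mem : ∀ x, x ∈ cap W e ∩ cap W (-e) ↔ x ∈ SW W ∧ |⟪e, x⟫| ≤ 1 / 2 := by
    intro x
    simp only [cap, mem_inter_iff, mem_ofPred_eq, inner_neg_left, abs_le]
    constructor
    · rintro ⟨⟨h, h1⟩, _, h2⟩; exact ⟨h, h1, by linarith⟩
    · rintro ⟨h, h1, h2⟩; exact ⟨⟨h, h1⟩, h, by linarith⟩
  have memR : ∀ x, x ∈ SW ((ℝ ∙ e)ᗮ ⊓ W) ↔ x ∈ SW W ∧ ⟪e, x⟫ = 0 := by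
    intro x
    simp only [SW, mem_ofPred_eq, Submodule.mem_inf, Submodule.mem_orthogonal_singleton_iff_inner_right]
    tauto
  set y : ℝ → V → V := fun t x => x - (t * ⟪e, x⟫) • e with hy
  have hin : ∀ t x, ⟪e, y t x⟫ = (1 - t) * ⟪e, x⟫ := by
    intro t x
    simp only [hy]
    rw [inner_sub_right, inner_smul_right, real_inner_self_eq_norm_sq, he.2]; ring
  have hnorm : ∀ t x, ‖x‖ = 1 → ‖y t x‖ ^ 2 = 1 - ⟪e, x⟫ ^ 2 + ((1 - t) * ⟪e, x⟫) ^ 2 := by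
    intro t x hx
    simp only [hy]
    rw [norm_sub_sq_real, inner_smul_right, norm_smul, he.2, hx, real_inner_comm, mul_one,
      Real.norm_eq_abs, sq_abs]
    ring
  have key : ∀ t ∈ Icc (0 : ℝ) 1, ∀ x ∈ cap W e ∩ cap W (-e),
      y t x ≠ 0 ∧ |⟪e, y t x⟫| ≤ 1 / 2 * ‖y t x‖ := by
    rintro t ⟨ht0, ht1⟩ x hx
    obtain ⟨⟨hxW, hx1⟩, hx2⟩ := (mem x).1 hx
    have h1 := hnorm t x hx1
    have h2 : ⟪e, x⟫ ^ 2 ≤ 1 / 4 := by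
      rw [← sq_abs]; nlinarith [abs_nonneg ⟪e, x⟫]
    have h3 : ((1 - t) * ⟪e, x⟫) ^ 2 ≤ ⟪e, x⟫ ^ 2 := by
      rw [mul_pow]
      have : (1 - t) ^ 2 ≤ 1 := by nlinarith
      nlinarith [sq_nonneg ⟪e, x⟫]
    constructor
    · intro h0
      rw [h0, norm_zero] at h1
      nlinarith [sq_nonneg ((1 - t) * ⟪e, x⟫)]
    · rw [hin]
      apply abs_le_of_sq_le_sq _ (by positivity)
      rw [mul_pow (1 / 2 : ℝ), h1]; linarith
  have hF : ContinuousOn (fun p : ℝ × V => nrm (y p.1 p.2))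
      (Icc 0 1 ×ˢ (cap W e ∩ cap W (-e))) := by
    refine continuousOn_nrm (by simp only [hy]; fun_prop) ?_
    rintro ⟨t, x⟩ ⟨ht, hx⟩
    exact (key t ht x hx).1
  have hmapW : ∀ t ∈ Icc (0 : ℝ) 1, ∀ x ∈ cap W e ∩ cap W (-e), nrm (y t x) ∈ SW W :=
    fun t ht x hx => ⟨W.smul_mem _ (W.sub_mem hx.1.1.1 (W.smul_mem _ he.1)),
      norm_nrm (key t ht x hx).1⟩
  have hm : ∀ t ∈ Icc (0 : ℝ) 1, MapsTo (fun x => nrm (y t x)) (cap W e ∩ cap W (-e))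
      (cap W e ∩ cap W (-e)) := by
    intro t ht x hx
    obtain ⟨h1, h2⟩ := key t ht x hx
    refine (mem _).2 ⟨hmapW t ht x hx, ?_⟩
    have hp := norm_pos_iff.2 h1
    change |⟪e, ‖y t x‖⁻¹ • y t x⟫| ≤ 1 / 2
    rw [inner_smul_right, abs_mul, abs_of_pos (inv_pos.2 hp), ← div_eq_inv_mul,
      div_le_iff₀ hp]
    exact h2
  have h1mem : (1 : ℝ) ∈ Icc (0 : ℝ) 1 := by simp
  have hf' : MapsTo (fun x => nrm (y 1 x)) (cap W e ∩ cap W (-e)) (SW ((ℝ ∙ e)ᗮ ⊓ W)) := by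
    intro x hx
    refine (memR _).2 ⟨hmapW 1 h1mem x hx, ?_⟩
    change ⟪e, ‖y 1 x‖⁻¹ • y 1 x⟫ = 0
    rw [inner_smul_right, hin]; simp
  have hf : UniformContinuousOn (fun x => nrm (y 1 x)) (cap W e ∩ cap W (-e)) := by
    apply hcomp.uniformContinuousOn_of_continuous
    exact hF.comp (f := fun x => ((1 : ℝ), x)) (by fun_prop) fun x hx => ⟨h1mem, hx⟩
  have hg : UniformContinuousOn (id : V → V) (SW ((ℝ ∙ e)ᗮ ⊓ W)) :=
    uniformContinuous_id.uniformContinuousOn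
  have hg' : MapsTo (id : V → V) (SW ((ℝ ∙ e)ᗮ ⊓ W)) (cap W e ∩ cap W (-e)) := by
    intro x hx
    obtain ⟨h1, h2⟩ := (memR x).1 hx
    exact (mem _).2 ⟨h1, by rw [id, h2]; norm_num⟩
  have h0 : ∀ x ∈ cap W e ∩ cap W (-e), nrm (y 0 x) = x := by
    intro x hx
    simp [hy, nrm_of_norm hx.1.1.2]
  refine ⟨acyc_of_deform hcomp hf hf' hg hg' (fun t x => nrm (y t x)) hF hm h0 (fun x hx => rfl),
    oneDim_of_deform hcomp hf hf' hg hg' (fun t x => nrm (y t x)) hF hm h0 (fun x hx => rfl) ?_⟩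
  intro x hx
  obtain ⟨h1, h2⟩ := (memR x).1 hx
  simp [hy, h2, nrm_of_norm h1.2]

/-- The unit sphere of a `d`-dimensional space has reduced cohomology in degree `d - 1` only, where it
is one-dimensional. The induction starts at the empty sphere, whose `(-1)`-simplex carries the class. -/
lemma sphere_cohomology (d : ℕ) (W : Submodule ℝ V) (hW : Module.finrank ℝ W = d) :
    OneDim (SW W) d ∧ ∀ m, m ≠ d → Acyc (SW W) m := by
  induction d generalizing W with
  | zero =>
    have hS : SW W = ∅ := by
      rw [Submodule.finrank_eq_zero] at hW
      subst hW
      ext x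
      simp only [SW, Submodule.mem_bot, mem_ofPred_eq, mem_empty_iff_false, iff_false, not_and]
      rintro rfl; simp
    have hv : ∀ m (P : List V → Prop), ∀ᶠ l in sm (SW W) (m + 1), P l := by
      intro m P
      filter_upwards [ev_length (SW W) (m + 1)] with l hl
      rcases l with _ | ⟨x, l⟩
      · simp at hl
      · exact absurd (hl.2 x (by simp)) (by simp [hS])
    refine ⟨⟨⟨fun _ => 1, hv 0 _, ?_⟩, ?_⟩, ?_⟩
    · rintro ⟨b, hb⟩
      obtain ⟨ε, hε, h⟩ := ev_eq.1 hb
      have := h [] rfl ⟨by simp, by simp⟩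
      simp [D] at this
    · intro c c' _ _ hn hn'
      have aux : ∀ c : List V → ZMod 2, (¬∃ b, c =ᶠ[sm (SW W) 0] D b) → c [] = 1 := by
        intro c hn
        by_contra h
        have h0 : c [] = 0 := by
          generalize c [] = a at *
          revert a; decide
        refine hn ⟨0, ?_⟩
        filter_upwards [ev_length (SW W) 0] with l hl
        rw [List.length_eq_zero_iff.1 hl.1, h0]; rfl
      refine ⟨0, ?_⟩
      filter_upwards [ev_length (SW W) 0] with l hl
      rw [List.length_eq_zero_iff.1 hl.1, Pi.add_apply, aux c hn, aux c' hn']; rfl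
    · intro m hm c _
      obtain ⟨k, rfl⟩ := Nat.exists_eq_succ_of_ne_zero hm
      exact ⟨0, hv k _⟩
  | succ d ih =>
    obtain ⟨e, he⟩ : ∃ e, e ∈ SW W := by
      have : Nontrivial W := Module.nontrivial_of_finrank_pos (R := ℝ) (by omega)
      obtain ⟨w, hw⟩ := exists_ne (0 : W)
      have hw' : (w : V) ≠ 0 := by simpa using hw
      exact ⟨nrm (w : V), W.smul_mem _ w.2, norm_nrm hw'⟩
    have hfr : Module.finrank ℝ ((ℝ ∙ e)ᗮ ⊓ W : Submodule ℝ V) = d := by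
      have h1 := Submodule.finrank_add_inf_finrank_orthogonal (K₁ := ℝ ∙ e) (K₂ := W)
        (by rw [Submodule.span_singleton_le_iff_mem]; exact he.1)
      rw [finrank_span_singleton (fun h => by simpa [h] using he.2)] at h1
      omega
    obtain ⟨ih1, ih2⟩ := ih _ hfr
    obtain ⟨hu, hL⟩ := cap_cover W he
    have hne : -e ∈ SW W := ⟨W.neg_mem he.1, by simpa using he.2⟩
    rw [← hu]
    refine ⟨mv_oneDim hL (cap_acyc W he) (cap_acyc W hne) ((band_deform W he _).2 ih1), ?_⟩
    intro m hm
    rcases m with _ | m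
    · intro c hc
      obtain ⟨ε, hε, h⟩ := ev_eq.1 hc
      have := h [e] rfl ⟨by simp [hu, he], by simpa using hε⟩
      refine ⟨0, ?_⟩
      filter_upwards [ev_length _ 0] with l hl
      rw [List.length_eq_zero_iff.1 hl.1]
      simpa [D] using this
    · exact mv_acyc hL (cap_acyc W he) (cap_acyc W hne)
        ((band_deform W he _).1 (ih2 m (by omega)))

end Sphere

/-! ### Invariant cochains and involutions -/

/-- The product of `c` with the function `χ` evaluated at the first vertex; a cup product with a
`0`-cochain. -/
def hmul (χ : α → ZMod 2) (c : List α → ZMod 2) : List α → ZMod 2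
  | [] => 0
  | x :: l => χ x * c (x :: l)

omit [PseudoMetricSpace α] in
lemma D_hmul (χ : α → ZMod 2) (c : List α → ZMod 2) (x y : α) (l : List α) :
    D (hmul χ c) (x :: y :: l) = (χ x + χ y) * c (y :: l) + χ x * D c (x :: y :: l) := by
  have h : (fun k => hmul χ c (x :: k)) = fun k => χ x * c (x :: k) := rfl
  have e : D (hmul χ c) (x :: y :: l)
      = hmul χ c (y :: l) + D (fun k => hmul χ c (x :: k)) (y :: l) := rfl
  have e' : D c (x :: y :: l) = c (y :: l) + D (fun k => c (x :: k)) (y :: l) := rfl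
  rw [e, e', h, D_mul, hmul]
  grind

/-- The cochain `c` is invariant under `T` on small simplices with `m` vertices in `S`. -/
def Inv (T : α → α) (S : Set α) (m : ℕ) (c : List α → ZMod 2) : Prop := pull T c =ᶠ[sm S m] c

/-- The map `T` restricts to a uniformly continuous involution of `M`. -/
structure Invol (T : α → α) (M : Set α) : Prop where
  uc : UniformContinuousOn T M
  mt : MapsTo T M M
  inv : ∀ x ∈ M, T (T x) = x

lemma Inv.add {T : α → α} {M : Set α} {m : ℕ} {c c' : List α → ZMod 2} (h : Inv T M m c)
    (h' : Inv T M m c') : Inv T M m (c + c') := Filter.EventuallyEq.add h h'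

lemma Inv.D {T : α → α} {M : Set α} {m : ℕ} {c : List α → ZMod 2} (h : Inv T M m c) :
    Inv T M (m + 1) (D c) := by
  unfold Inv; rw [← D_pull]; exact ev_D h

lemma Invol.pull_pull {T : α → α} {M : Set α} (hT : Invol T M) (m : ℕ) (c : List α → ZMod 2) :
    pull T (pull T c) =ᶠ[sm M m] c := by
  rw [Milnor.pull_pull]
  conv_rhs => rw [← pull_id c]
  exact pull_congr (fun x hx => hT.inv x hx) c m

lemma Invol.inv_sum {T : α → α} {M : Set α} (hT : Invol T M) (m : ℕ) (c : List α → ZMod 2) :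
    Inv T M m (c + pull T c) := by
  have := hT.pull_pull m c
  unfold Inv
  filter_upwards [this] with l hl
  simp only [pull_add, Pi.add_apply, hl]; ring

lemma Inv.pull {T S : α → α} {M : Set α} {m : ℕ} {c : List α → ZMod 2} (h : Inv T M m c)
    (hS : Invol S M) (hc : ∀ x ∈ M, T (S x) = S (T x)) :
    Inv T M m (pull S c) := by
  unfold Inv at *
  have h1 := ev_pull hS.uc hS.mt h
  have h2 : Milnor.pull T (Milnor.pull S c) =ᶠ[sm M m] Milnor.pull S (Milnor.pull T c) := by
    rw [Milnor.pull_pull, Milnor.pull_pull]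
    exact pull_congr (fun x hx => (hc x hx).symm) c m
  exact h2.trans h1

lemma Inv.hmul {T : α → α} {M : Set α} {m : ℕ} {c : List α → ZMod 2} (h : Inv T M m c)
    {χ : α → ZMod 2} (hχ : ∀ x ∈ M, χ (T x) = χ x) : Inv T M m (hmul χ c) := by
  unfold Inv at *
  filter_upwards [h, ev_length M m] with l hl h2
  rcases l with _ | ⟨x, l⟩
  · rfl
  · simp only [Milnor.pull, List.map_cons, Milnor.hmul] at *
    rw [hl, hχ x (h2.2 x (by simp))]

/-- If `χ` separates the two points of each orbit of `T`, an invariant cochain is the sum of the two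
translates of `hmul χ c`. -/
lemma hmul_sum {T : α → α} {M : Set α} {m : ℕ} {c : List α → ZMod 2} (h : Inv T M (m + 1) c)
    {χ : α → ZMod 2} (hχ : ∀ x ∈ M, χ (T x) = χ x + 1) :
    hmul χ c + pull T (hmul χ c) =ᶠ[sm M (m + 1)] c := by
  unfold Inv at *
  filter_upwards [h, ev_length M (m + 1)] with l hl h2
  rcases l with _ | ⟨x, l⟩
  · simp at h2
  · simp only [Milnor.pull, List.map_cons, Milnor.hmul, Pi.add_apply] at *
    rw [hl, hχ x (h2.2 x (by simp))]
    grind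

lemma ev_D_hmul {M : Set α} {m : ℕ} {c : List α → ZMod 2} (χ : α → ZMod 2)
    (hc : D c =ᶠ[sm M (m + 1 + 1)] 0) : ∀ᶠ l in sm M (m + 1 + 1), ∃ x y k, l = x :: y :: k ∧
      D (hmul χ c) l = (χ x + χ y) * c (y :: k) := by
  filter_upwards [hc, ev_length M (m + 1 + 1)] with l hl h2
  rcases l with _ | ⟨x, _ | ⟨y, k⟩⟩
  · simp at h2
  · simp at h2
  · refine ⟨x, y, k, rfl, ?_⟩
    rw [D_hmul, hl]; simp

/-- A property of small simplices passes to the face opposite to the first vertex. -/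
lemma ev_tail {M : Set α} {m : ℕ} {P : List α → Prop} (h : ∀ᶠ l in sm M m, P l) :
    ∀ᶠ l in sm M (m + 1), P l.tail := by
  obtain ⟨ε, hε, h⟩ := ev_sm.1 h
  exact ⟨ε, hε, fun l hl hl' => h _ (by simp [hl]) (hl'.sub fun x hx => List.mem_of_mem_tail hx)⟩

/-- A list of pairs `(U, χ)`, each a trivialization over `U` of the double cover obtained from the
involution `S` on the quotient by `T`: `χ` is `T`-invariant, changes sign under `S` and is uniformly
locally constant on `U`. Away from `U` no continuity is asked of `χ`. -/
def Charts (T S : α → α) (M : Set α) (L : List (Set α × (α → ZMod 2))) : Prop :=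
  ∀ p ∈ L, (∀ x ∈ M, p.2 (T x) = p.2 x) ∧ (∀ x ∈ M, p.2 (S x) = p.2 x + 1) ∧
    ∃ ε > 0, ∀ x ∈ p.1 ∩ M, ∀ y ∈ p.1 ∩ M, dist x y < ε → p.2 x = p.2 y

/-- Every cocycle on simplices with `m + 1` vertices that is invariant under `T` and `S` is the
coboundary of a cochain invariant under both. -/
def InvAcyc (T S : α → α) (M : Set α) (m : ℕ) : Prop :=
  ∀ c : List α → ZMod 2, D c =ᶠ[sm M (m + 1 + 1)] 0 → Inv T M (m + 1) c → Inv S M (m + 1) c →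
    ∃ b, Inv T M m b ∧ Inv S M m b ∧ c =ᶠ[sm M (m + 1)] D b

/-- Acyclicity of the `T`-invariant complex in all degrees from some point on passes to the complex
invariant under `T` and `S`. For a chart `(U, χ)` the coboundary of `hmul χ c` vanishes on the
simplices inside `U`. Induction over the charts, where `V` is the property of lying in one of the
charts already used, writes this coboundary as that of an invariant `s`. The sum `hmul χ c + s` is
then a `T`-invariant cocycle whose two translates under `S` add up to `c`. -/
lemma invAcyc_aux {T S : α → α} {M : Set α} (hS : Invol S M)
    (hTS : ∀ x ∈ M, T (S x) = S (T x)) {m₀ : ℕ} (H : ∀ m, m₀ ≤ m → InvAcyc T id M m)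
    (L : List (Set α × (α → ZMod 2))) (hL : Charts T S M L) (V : List α → Prop)
    (hV : ∀ x l, V (x :: l) → V l)
    (hcov : ∀ k, ∀ᶠ l in sm M (k + 1), V l ∨ ∃ p ∈ L, ∀ x ∈ l, x ∈ p.1) {m : ℕ} (hm : m₀ ≤ m)
    (c : List α → ZMod 2) (hc : D c =ᶠ[sm M (m + 1 + 1)] 0) (hcT : Inv T M (m + 1) c)
    (hcS : Inv S M (m + 1) c) (hcV : ∀ᶠ l in sm M (m + 1), V l → c l = 0) :
    ∃ b, Inv T M m b ∧ Inv S M m b ∧ c =ᶠ[sm M (m + 1)] D b := by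
  induction L generalizing V m c with
  | nil =>
    refine ⟨0, EventuallyEq.rfl, EventuallyEq.rfl, ?_⟩
    filter_upwards [hcov m, hcV] with l h1 h2
    rw [D_zero]
    simp only [List.not_mem_nil, false_and, exists_false, or_false] at h1
    exact h2 h1
  | cons p L ih =>
    obtain ⟨hp1, hp2, ε, hε, hp3⟩ := hL p (by simp)
    set t := hmul p.2 c with ht
    have htT : Inv T M (m + 1) t := hcT.hmul hp1
    have htS : t + pull S t =ᶠ[sm M (m + 1)] c := hmul_sum hcS hp2
    obtain ⟨s, hsT, hsS, hs⟩ := ih (fun q hq => hL q (by simp [hq]))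
      (fun l => V l ∨ ∀ x ∈ l, x ∈ p.1)
      (fun x l h => h.imp (hV x l) fun h y hy => h y (by simp [hy]))
      (fun k => by
        filter_upwards [hcov k] with l hl
        rcases hl with h | ⟨q, hq, h⟩
        · exact Or.inl (Or.inl h)
        · rcases List.mem_cons.1 hq with rfl | hq
          · exact Or.inl (Or.inr h)
          · exact Or.inr ⟨q, hq, h⟩)
      (m := m + 1) (by omega) (D t) (by rw [D_D]) htT.D
      (by
        have h1 := ev_D htS
        unfold Inv
        rw [← D_pull]
        filter_upwards [h1, hc] with l h1 h2
        simp only [D_add, Pi.add_apply] at h1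
        rw [h2] at h1
        simp only [Pi.zero_apply] at h1
        grind)
      (by
        have hsm : ∀ᶠ l in sm M (m + 1 + 1), Small M ε l := ⟨ε, hε, fun _ _ h => h⟩
        filter_upwards [ev_D_hmul p.2 hc, ev_tail hcV, hsm] with l h1 h2 h3 h4
        obtain ⟨x, y, k, rfl, h1⟩ := h1
        rw [ht, h1]
        rcases h4 with h4 | h4
        · have h5 : c (y :: k) = 0 := h2 (hV _ _ h4)
          rw [h5, mul_zero]
        · have : p.2 x = p.2 y := hp3 x ⟨h4 x (by simp), h3.1 x (by simp)⟩ y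
            ⟨h4 y (by simp), h3.1 y (by simp)⟩ (h3.2 x (by simp) y (by simp))
          rw [this, two_mul_zero, zero_mul])
    obtain ⟨r, hrT, -, hr⟩ := H m hm (t + s)
      (by
        filter_upwards [hs] with l hl
        simp only [D_add, Pi.add_apply, Pi.zero_apply, hl]; exact two_mul_zero _)
      (htT.add hsT) (by unfold Inv; rw [pull_id])
    refine ⟨r + pull S r, hrT.add (hrT.pull hS hTS), hS.inv_sum m r, ?_⟩
    have hr' := ev_pull hS.uc hS.mt hr
    unfold Inv at hsS
    rw [← D_pull] at hr'
    filter_upwards [hr, hr', htS, hsS] with l h1 h2 h3 h4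
    simp only [Pi.add_apply, D_add, pull_add] at *
    grind

/-! ### Free involutions: local sections of the double cover -/

section Cover

variable {X : Type*} [MetricSpace X]

omit [MetricSpace X] in
/-- For commuting involutions `T`, `S` such that `S` moves every `T`-orbit, there is a `T`-invariant
function, not continuous in general, that separates each `T`-orbit from its image under `S`. It
compares the minima of the two orbits in some linear order. -/
lemma exists_sign {M : Set X} {T S : X → X} (hTm : MapsTo T M M) (hSm : MapsTo S M M)
    (hTT : ∀ x ∈ M, T (T x) = x) (hSS : ∀ x ∈ M, S (S x) = x)
    (hTS : ∀ x ∈ M, T (S x) = S (T x)) (hf : ∀ x ∈ M, S x ≠ x) (hf' : ∀ x ∈ M, T x ≠ S x) :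
    ∃ χ : X → ZMod 2, ∀ x ∈ M, χ (T x) = χ x ∧ χ (S x) = χ x + 1 := by
  classical
  let _ : LinearOrder X := linearOrderOfSTO (WellOrderingRel (α := X))
  set μ : X → X := fun x => min x (T x) with hμ
  have h1 : ∀ x ∈ M, μ (T x) = μ x := fun x hx => by simp only [hμ, hTT x hx, min_comm]
  have h2 : ∀ x ∈ M, μ (S x) ≠ μ x := by
    intro x hx h
    have a1 := hf x hx
    have a2 := hf' x hx
    have a3 := hf (T x) (hTm hx)
    have a4 : T (S x) ≠ x := by
      intro h; apply a2; rw [← hTT _ (hSm hx), h]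
    simp only [hμ] at h
    rcases min_choice (S x) (T (S x)) with e | e <;> rcases min_choice x (T x) with e' | e' <;>
      rw [e, e'] at h
    · exact a1 h
    · exact a2 h.symm
    · exact a4 h
    · exact a3 ((hTS x hx).symm.trans h)
  refine ⟨fun x => if μ x < μ (S x) then 1 else 0, fun x hx => ⟨?_, ?_⟩⟩
  · simp only [h1 x hx, ← hTS x hx, h1 _ (hSm hx)]
  · simp only [hSS x hx]
    rcases lt_or_gt_of_ne (h2 x hx) with h | h
    · simp [h, h.not_gt]
    · simp [h, h.not_gt]; decide

/-- Compactness gives finitely many charts. The chart at `z` consists of the points `y` such that the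
`T`-orbit of `y` or that of `S y` comes close to `z`, and these two alternatives define `χ` there. -/
lemma exists_charts {M : Set X} (hM : IsCompact M) {T S : X → X} (hT : Invol T M)
    (hS : Invol S M) (hTS : ∀ x ∈ M, T (S x) = S (T x)) (hf : ∀ x ∈ M, S x ≠ x)
    (hf' : ∀ x ∈ M, T x ≠ S x) :
    ∃ L, Charts T S M L ∧ ∀ k, ∀ᶠ l in sm M (k + 1), ∃ p ∈ L, ∀ x ∈ l, x ∈ p.1 := by
  classical
  obtain ⟨χ, hχ⟩ := exists_sign hT.mt hS.mt hT.inv hS.inv hTS hf hf'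
  obtain ⟨ρ, hρ, hρ1, hρ2⟩ : ∃ ρ > 0, (∀ x ∈ M, ρ ≤ dist x (S x)) ∧
      ∀ x ∈ M, ρ ≤ dist (T x) (S x) := by
    rcases M.eq_empty_or_nonempty with rfl | hne
    · exact ⟨1, one_pos, by simp, by simp⟩
    · have c1 : ContinuousOn (fun x => dist x (S x)) M :=
        continuous_dist.comp_continuousOn (continuousOn_id.prodMk hS.uc.continuousOn)
      have c2 : ContinuousOn (fun x => dist (T x) (S x)) M :=
        continuous_dist.comp_continuousOn (hT.uc.continuousOn.prodMk hS.uc.continuousOn)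
      obtain ⟨x, hx, hx'⟩ := hM.exists_isMinOn hne
        (f := fun x => min (dist x (S x)) (dist (T x) (S x)))
        (continuous_min.comp_continuousOn (c1.prodMk c2))
      refine ⟨_, lt_min (dist_pos.2 (hf x hx).symm) (dist_pos.2 (hf' x hx)), ?_, ?_⟩
      · intro y hy; exact (hx' hy).trans (min_le_left _ _)
      · intro y hy; exact (hx' hy).trans (min_le_right _ _)
  obtain ⟨κ, hκ, hκρ, hκT⟩ : ∃ κ > 0, κ ≤ ρ / 2 ∧
      ∀ x ∈ M, ∀ y ∈ M, dist x y < κ → dist (T x) (T y) < ρ / 2 := by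
    obtain ⟨κ, hκ, h⟩ := Metric.uniformContinuousOn_iff.1 hT.uc (ρ / 2) (by positivity)
    exact ⟨min κ (ρ / 2), by positivity, min_le_right _ _, fun x hx y hy h' =>
      h x hx y hy (h'.trans_le (min_le_left _ _))⟩
  let P : X → X → Prop := fun z y => dist y z < κ / 2 ∨ dist (T y) z < κ / 2
  -- The two sheets of the chart at `z` keep a distance of at least `κ`.
  have sep : ∀ z, ∀ x ∈ M, ∀ y ∈ M, dist x y < κ → P z x → P z (S y) → False := by
    intro z x hx y hy hxy h1 h2
    have hxy' := hκT x hx y hy hxy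
    have tri : ∀ a b : X, dist a z < κ / 2 → dist b z < κ / 2 → dist a b < κ := by
      intro a b ha hb
      have := dist_triangle_right a b z
      linarith
    have b1 := hρ1 y hy
    have b2 := hρ2 y hy
    have hSy := hS.mt hy
    rcases h1 with h1 | h1 <;> rcases h2 with h2 | h2
    · have := tri _ _ h1 h2
      have := dist_triangle_left y (S y) x
      linarith
    · have := hκT _ hx _ (hT.mt hSy) (tri _ _ h1 h2)
      rw [hT.inv _ hSy] at this
      have := dist_triangle_left (T y) (S y) (T x)
      linarith
    · have := tri _ _ h1 h2
      have := dist_triangle_left (T y) (S y) (T x)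
      linarith
    · have := hκT _ (hT.mt hx) _ (hT.mt hSy) (tri _ _ h1 h2)
      rw [hT.inv _ hSy, hT.inv _ hx] at this
      have := dist_triangle_left y (S y) x
      linarith
  have hPT : ∀ z, ∀ x ∈ M, P z (T x) ↔ P z x := by
    intro z x hx
    simp only [P, hT.inv x hx, or_comm]
  let χ' : X → X → ZMod 2 := fun z y => if P z y then 1 else if P z (S y) then 0 else χ y
  obtain ⟨C, -, hCf, hCM⟩ := Metric.finite_approx_of_totallyBounded hM.totallyBounded (κ / 4)
    (by positivity)
  refine ⟨hCf.toFinset.toList.map fun z => ({y | P z y ∨ P z (S y)}, χ' z), ?_, ?_⟩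
  · intro p hp
    obtain ⟨z, -, rfl⟩ := List.mem_map.1 hp
    have hself : ∀ x ∈ M, P z x → P z (S x) → False := fun x hx =>
      sep z x hx x hx (by simpa using hκ)
    refine ⟨fun x hx => ?_, fun x hx => ?_, κ, hκ, ?_⟩
    · simp only [χ', hPT z x hx, ← hTS x hx, hPT z _ (hS.mt hx), (hχ x hx).1]
    · simp only [χ', hS.inv x hx, (hχ x hx).2]
      by_cases h1 : P z x <;> by_cases h2 : P z (S x)
      · exact (hself x hx h1 h2).elim
      · simp only [h1, h2, if_true, if_false]; decide
      · simp only [h1, h2, if_true, if_false]; decide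
      · simp only [h1, h2, if_false]
    · rintro x ⟨hx1, hx⟩ y ⟨hy1, hy⟩ hxy
      simp only [χ']
      rcases hx1 with hx1 | hx1 <;> rcases hy1 with hy1 | hy1
      · rw [if_pos hx1, if_pos hy1]
      · exact (sep z x hx y hy hxy hx1 hy1).elim
      · exact (sep z y hy x hx (by rwa [dist_comm]) hy1 hx1).elim
      · have h1 : ¬ P z x := fun h => hself x hx h hx1
        have h2 : ¬ P z y := fun h => hself y hy h hy1
        rw [if_neg h1, if_neg h2, if_pos hx1, if_pos hy1]
  · intro k
    refine ⟨κ / 4, by positivity, fun l hl hl' => ?_⟩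
    rcases l with _ | ⟨x, l⟩
    · simp at hl
    · obtain ⟨z, hz, hxz⟩ := mem_iUnion₂.1 (hCM (hl'.1 x (by simp)))
      refine ⟨_, List.mem_map.2 ⟨z, by simpa using hz, rfl⟩, fun y hy => Or.inl (Or.inl ?_)⟩
      have h1 := hl'.2 y hy x (by simp)
      have h2 : dist x z < κ / 4 := hxz
      have := dist_triangle y x z
      linarith

lemma invAcyc_step {M : Set X} (hM : IsCompact M) {T S : X → X} (hT : Invol T M)
    (hS : Invol S M) (hTS : ∀ x ∈ M, T (S x) = S (T x)) (hf : ∀ x ∈ M, S x ≠ x)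
    (hf' : ∀ x ∈ M, T x ≠ S x) {m₀ : ℕ} (H : ∀ m, m₀ ≤ m → InvAcyc T id M m) {m : ℕ}
    (hm : m₀ ≤ m) : InvAcyc T S M m := by
  obtain ⟨L, hL, hcov⟩ := exists_charts hM hT hS hTS hf hf'
  intro c hc hcT hcS
  exact invAcyc_aux hS hTS H L hL (fun _ => False) (fun _ _ h => h)
    (fun k => (hcov k).mono fun l hl => Or.inr hl) hm c hc hcT hcS
    (Eventually.of_forall fun _ h => h.elim)

lemma invol_id (M : Set X) : Invol (id : X → X) M :=
  ⟨uniformContinuous_id.uniformContinuousOn, fun _ h => h, fun _ _ => rfl⟩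

/-- If the cohomology of `M` vanishes in high degrees, so does that of the complex of cochains invariant
under a free involution. -/
lemma invAcyc_single {M : Set X} (hM : IsCompact M) {S : X → X}
    (hS : Invol S M) (hf : ∀ x ∈ M, S x ≠ x)
    {m₀ : ℕ} (H : ∀ m, m₀ ≤ m → Acyc M (m + 1)) {m : ℕ} (hm : m₀ ≤ m) : InvAcyc S id M m := by
  intro c hc hcS _
  obtain ⟨b, -, hb, h⟩ := invAcyc_step hM (invol_id M) hS (fun _ _ => rfl) hf
    (fun x hx => (hf x hx).symm) (m₀ := m₀) (fun m hm c hc _ _ => by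
      obtain ⟨b, hb⟩ := H m hm c hc
      exact ⟨b, by unfold Inv; rw [pull_id], by unfold Inv; rw [pull_id], hb⟩) hm c hc
    (by unfold Inv; rw [pull_id]) hcS
  exact ⟨b, hb, by unfold Inv; rw [pull_id], h⟩

end Cover

/-! ### No free action of the Klein four-group -/

/-- The power `w ^ k` on simplices with `k + 1` vertices, where `w` is the class of the double cover,
with cocycle `χ x + χ y` on the edge `[x, y]`. -/
def cw (χ : α → ZMod 2) : List α → ZMod 2
  | [] => 0
  | [_] => 1
  | x :: y :: l => (χ x + χ y) * cw χ (y :: l)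

omit [PseudoMetricSpace α] in
lemma D_cw (χ : α → ZMod 2) (m : ℕ) (l : List α) (hl : l.length = m + 2) : D (cw χ) l = 0 := by
  induction m generalizing l with
  | zero =>
    rcases l with _ | ⟨x, _ | ⟨y, _ | ⟨z, l⟩⟩⟩ <;> simp at hl
    simp [D, cw, two_mul_zero]
  | succ m ih =>
    have : D (cw χ) l = D (D (hmul χ (cw χ))) l := by
      refine D_congr _ _ _ fun k hk _ => ?_
      rcases k with _ | ⟨x, _ | ⟨y, k⟩⟩
      · simp at hk; omega
      · simp at hk; omega
      · rw [D_hmul, ih _ (by omega)]; simp [cw]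
    rw [this, D_D]; rfl

omit [PseudoMetricSpace α] in
/-- Upstairs, where `χ` is defined, `w ^ k` times `χ` is a primitive of `w ^ (k + 1)`. -/
lemma D_hmul_cw (χ : α → ZMod 2) (m : ℕ) (l : List α) (hl : l.length = m + 2) :
    D (hmul χ (cw χ)) l = cw χ l := by
  rcases l with _ | ⟨x, _ | ⟨y, l⟩⟩
  · simp at hl
  · simp at hl
  · rw [D_hmul, D_cw χ m _ hl]; simp [cw]

/-- Only differences of values of `χ` enter in `cw χ`, so it suffices that `T` changes `χ` by a constant. -/
lemma cw_inv {T : α → α} {M : Set α} {χ : α → ZMod 2}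
    (h : ∃ a, ∀ x ∈ M, χ (T x) = χ x + a) (m : ℕ) : Inv T M m (cw χ) := by
  obtain ⟨a, h⟩ := h
  have key : ∀ l : List α, (∀ x ∈ l, x ∈ M) → cw χ (l.map T) = cw χ l := by
    intro l hl
    induction l with
    | nil => rfl
    | cons x l ih =>
      rcases l with _ | ⟨y, l⟩
      · rfl
      · have := ih fun z hz => hl z (by simp [hz])
        simp only [List.map_cons, cw] at *
        rw [this, h x (hl x (by simp)), h y (hl y (by simp))]
        grind
  unfold Inv
  filter_upwards [ev_length M m] with l hl
  exact key l hl.2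

/-- A homeomorphism fixes the only nonzero class. -/
lemma OneDim.sum {M : Set α} {m : ℕ} (h : OneDim M m) {f g : α → α}
    (hf : UniformContinuousOn f M) (hf' : MapsTo f M M)
    (hg : UniformContinuousOn g M) (hg' : MapsTo g M M) (hfg : ∀ x ∈ M, f (g x) = x)
    {c : List α → ZMod 2} (hc : D c =ᶠ[sm M (m + 1)] 0) :
    ∃ r, c + pull f c =ᶠ[sm M m] D r := by
  by_cases he : ∃ b, c =ᶠ[sm M m] D b
  · obtain ⟨b, hb⟩ := he
    refine ⟨b + pull f b, ?_⟩
    have h1 := ev_pull hf hf' hb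
    rw [D_add, D_pull]
    exact hb.add h1
  · refine h.2 _ _ hc ?_ he ?_
    · rw [D_pull]
      exact ev_pull hf hf' hc
    · rintro ⟨b, hb⟩
      refine he ⟨pull g b, ?_⟩
      have h1 := ev_pull hg hg' hb
      rw [pull_pull, ← D_pull] at h1
      refine EventuallyEq.trans ?_ h1
      conv_lhs => rw [← pull_id c]
      exact pull_congr (fun x hx => (hfg x hx).symm) c m

/-- Surjectivity of the transfer in the top degree: an invariant cocycle is the sum of the two translates
under `S` of a `T`-invariant cocycle. -/
lemma exists_transfer {M : Set α} {T S : α → α} {m : ℕ} (H : InvAcyc T S M (m + 1))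
    {χ : α → ZMod 2} (hT : ∀ x ∈ M, χ (T x) = χ x) (hS : ∀ x ∈ M, χ (S x) = χ x + 1)
    {c : List α → ZMod 2} (hc : D c =ᶠ[sm M (m + 1 + 1)] 0) (hcT : Inv T M (m + 1) c)
    (hcS : Inv S M (m + 1) c) :
    ∃ t, D t =ᶠ[sm M (m + 1 + 1)] 0 ∧ Inv T M (m + 1) t ∧ c =ᶠ[sm M (m + 1)] t + pull S t := by
  have h1 := hmul_sum hcS hS
  have h2 : Inv S M (m + 1 + 1) (D (hmul χ c)) := by
    have h1 := ev_D h1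
    unfold Inv
    rw [← D_pull]
    filter_upwards [h1, hc] with l h1 h2
    simp only [D_add, Pi.add_apply] at h1
    rw [h2] at h1
    simp only [Pi.zero_apply] at h1
    grind
  obtain ⟨s, hs1, hs2, hs⟩ := H (D (hmul χ c)) (by rw [D_D]) (hcT.hmul hT).D h2
  refine ⟨hmul χ c + s, ?_, (hcT.hmul hT).add hs1, ?_⟩
  · filter_upwards [hs] with l hl
    simp only [D_add, Pi.add_apply, hl, two_mul_zero, Pi.zero_apply]
  · unfold Inv at hs2
    filter_upwards [h1, hs2] with l h1 h2
    simp only [pull_add, Pi.add_apply] at *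
    grind

/-- A compact set with the cohomology of the `n`-sphere carries no free action of the Klein four-group.
Let `w` be the class of the cover for `T`, invariant under `S`. In the top degree `w ^ n` is a
transfer from the trivial group; the partial sum over `S` is exact by `OneDim.sum`, so that `w ^ n`
is the coboundary of a `T`-transfer. Multiplication by `χ` brings this property down to `w ^ 0 = 1`,
where it fails because the coboundary of `r + pull T r` on a vertex is twice the value `r []`. -/
lemma no_klein_four {X : Type*} [MetricSpace X] {M : Set X} (hM : IsCompact M)
    (hne : M.Nonempty) {n : ℕ} (h1 : OneDim M (n + 1)) (h2 : ∀ m, m ≠ n + 1 → Acyc M m)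
    {T S : X → X} (hT : Invol T M) (hS : Invol S M) (hTS : ∀ x ∈ M, T (S x) = S (T x))
    (fT : ∀ x ∈ M, T x ≠ x) (fS : ∀ x ∈ M, S x ≠ x) (fTS : ∀ x ∈ M, T x ≠ S x) : False := by
  obtain ⟨χb, hb⟩ := exists_sign hT.mt hS.mt hT.inv hS.inv hTS fS fTS
  obtain ⟨χ, hχ⟩ := exists_sign hS.mt hT.mt hS.inv hT.inv (fun x hx => (hTS x hx).symm) fT
    (fun x hx => (fTS x hx).symm)
  have A1 : ∀ m, n + 1 ≤ m → InvAcyc T id M m := fun m hm =>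
    invAcyc_single hM hT fT (m₀ := n + 1) (fun m hm => h2 (m + 1) (by omega)) hm
  have A2 : InvAcyc T S M (n + 1) := invAcyc_step hM hT hS hTS fS fTS A1 le_rfl
  have iT : ∀ m, Inv T M m (cw χ) := fun m => cw_inv ⟨1, fun x hx => (hχ x hx).2⟩ m
  have iS : ∀ m, Inv S M m (cw χ) := fun m => cw_inv ⟨0, fun x hx => by simpa using (hχ x hx).1⟩ m
  have cc : ∀ m, D (cw χ) =ᶠ[sm M (m + 1 + 1)] 0 := fun m => by
    filter_upwards [ev_length M (m + 1 + 1)] with l hl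
    exact D_cw χ m l hl.1
  have iid : ∀ m (c : List X → ZMod 2), Inv id M m c := fun m c => by unfold Inv; rw [pull_id]
  -- Two successive transfers, first from `S`, then from `T`.
  have top : ∃ r, cw χ =ᶠ[sm M (n + 1)] D (r + pull T r) := by
    obtain ⟨t, ht, htT, htS⟩ := exists_transfer A2 (fun x hx => (hb x hx).1)
      (fun x hx => (hb x hx).2) (cc n) (iT _) (iS _)
    obtain ⟨t', ht', -, e⟩ := exists_transfer (T := id) (S := T) (χ := χ) (m := n)
      (fun c a b d => by
        obtain ⟨b, h1, h2, h3⟩ := A1 (n + 1) le_rfl c a d b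
        exact ⟨b, h2, h1, h3⟩)
      (fun x hx => rfl) (fun x hx => (hχ x hx).2) ht (iid _ _) htT
    obtain ⟨r, hr⟩ := h1.sum hS.uc hS.mt hS.uc hS.mt hS.inv ht'
    refine ⟨r, ?_⟩
    have hrT := ev_pull hT.uc hT.mt hr
    rw [← D_pull] at hrT
    have eS := ev_pull hS.uc hS.mt e
    have comm : pull T (pull S t') =ᶠ[sm M (n + 1)] pull S (pull T t') := by
      rw [pull_pull, pull_pull]
      exact pull_congr (fun x hx => (hTS x hx).symm) _ _
    filter_upwards [hr, hrT, htS, e, eS, comm] with l h1 h2 h3 h4 h5 h6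
    simp only [pull_add, D_add, Pi.add_apply] at *
    grind
  -- Descent: `χ w ^ k + r + T r` is a cocycle, hence `D r'`, and its two translates sum to `w ^ k`.
  have all : ∀ k, k ≤ n → ∃ r, cw χ =ᶠ[sm M (k + 1)] D (r + pull T r) := by
    intro k hk
    induction hk using Nat.decreasingInduction with
    | self => exact top
    | of_succ k hk ih =>
      obtain ⟨r, hr⟩ := ih
      obtain ⟨r', hr'⟩ := h2 (k + 1) (by omega) (hmul χ (cw χ) + (r + pull T r)) (by
        filter_upwards [hr, ev_length M (k + 1 + 1)] with l h1 h2
        rw [D_add, Pi.add_apply, D_hmul_cw χ k l h2.1, h1]; exact two_mul_zero _)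
      refine ⟨r', ?_⟩
      have hrT := ev_pull hT.uc hT.mt hr'
      rw [← D_pull] at hrT
      have h3 := hmul_sum (iT (k + 1)) (χ := χ) (fun x hx => (hχ x hx).2)
      have h4 := hT.inv_sum (k + 1) r
      unfold Inv at h4
      filter_upwards [hr', hrT, h3, h4] with l a1 a2 a3 a4
      simp only [pull_add, D_add, Pi.add_apply] at *
      grind
  obtain ⟨r, ε, hε, hr⟩ := all 0 (Nat.zero_le _)
  obtain ⟨x, hx⟩ := hne
  have := hr [x] rfl ⟨by simpa using hx, by simpa using hε⟩
  simp [cw, D, pull, two_mul_zero] at this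

/-! ### The deleted product argument, abstractly -/

/-- The cochain `y` on simplices with `k` vertices admits a descending sequence: `T y + y = D y'`,
`T y' + y' = D y''`, and so on, ending with the value `0` on the empty simplex. -/
def Iter (T : α → α) (M : Set α) : ℕ → (List α → ZMod 2) → Prop
  | 0, y => y [] = 0
  | k + 1, y => ∃ z, pull T y + y =ᶠ[sm M (k + 1)] D z ∧ Iter T M k z

/-- Over a free involution, the end of the descending sequence can be solved upwards to
`y = t + T t + D t'`. -/
lemma Iter.split {T : α → α} {M : Set α} {χ : α → ZMod 2}
    (hχ : ∀ x ∈ M, χ (T x) = χ x + 1) {k : ℕ} {y : List α → ZMod 2} (h : Iter T M k y) :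
    ∃ t t', y =ᶠ[sm M k] t + pull T t + D t' := by
  induction k generalizing y with
  | zero =>
    refine ⟨0, 0, ?_⟩
    filter_upwards [ev_length M 0] with l hl
    rw [List.length_eq_zero_iff.1 hl.1, h]
    simp [D, pull]
  | succ k ih =>
    obtain ⟨y', hy, hy'⟩ := h
    obtain ⟨t, t', ht⟩ := ih hy'
    have h1 := ev_D ht
    simp only [D_add, D_D, add_zero] at h1
    have hv : Inv T M (k + 1) (y + D t) := by
      unfold Inv
      filter_upwards [hy, h1] with l a1 a2
      simp only [pull_add, D_pull, Pi.add_apply] at *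
      grind
    have h2 := hmul_sum hv hχ
    refine ⟨hmul χ (y + D t), t, ?_⟩
    filter_upwards [h2] with l a1
    simp only [Pi.add_apply] at *
    grind

/-- The data of the deleted product argument. The sets `C i` are increasing compact subsets of a space
(the deleted product) with an involution `τ` and a deformation `F` from the identity to `q ∘ p`, so
that `p` and `q` are homotopy inverse to each other. Both `τ` and `F` may lead from `C i` to the next
set only, since the deleted product itself is not compact. The map `γ` goes into the fixed points of
`τ` and is a section of `p`; the map `φ` is equivariant and lifts `f` along `p`. -/
structure Tower {X β : Type*} [MetricSpace X] [PseudoMetricSpace β] (M : Set X) (T f : X → X)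
    (C : ℕ → Set β) (τ : β → β) (F : ℝ → β → β) (p : β → X) (q γ φ : X → β) : Prop where
  compact : ∀ i, IsCompact (C i)
  mono : ∀ i, C i ⊆ C (i + 1)
  cτ : ∀ i, ContinuousOn τ (C i)
  mτ : ∀ i, MapsTo τ (C i) (C (i + 1))
  ττ : ∀ i, ∀ x ∈ C i, τ (τ x) = x
  cF : ∀ i, ContinuousOn (fun z : ℝ × β => F z.1 z.2) (Icc 0 1 ×ˢ C i)
  mF : ∀ i, ∀ t ∈ Icc (0 : ℝ) 1, MapsTo (F t) (C i) (C (i + 1))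
  F0 : ∀ i, ∀ x ∈ C i, F 0 x = x
  F1 : ∀ i, ∀ x ∈ C i, F 1 x = q (p x)
  cp : ∀ i, ContinuousOn p (C i)
  mp : ∀ i, MapsTo p (C i) M
  cq : ContinuousOn q M
  mq : MapsTo q M (C 0)
  cγ : ContinuousOn γ M
  mγ : MapsTo γ M (C 0)
  pγ : ∀ x ∈ M, p (γ x) = x
  τγ : ∀ x ∈ M, τ (γ x) = γ x
  cφ : ContinuousOn φ M
  mφ : MapsTo φ M (C 0)
  pφ : ∀ x ∈ M, p (φ x) = f x
  φT : ∀ x ∈ M, φ (T x) = τ (φ x)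

section
variable {X : Type*} [MetricSpace X] {M : Set X} {T f g : X → X}
    {C : ℕ → Set β} {τ : β → β} {F : ℝ → β → β} {p : β → X} {q γ φ : X → β}

lemma Tower.zero (H : Tower M T f C τ F p q γ φ) (i : ℕ) : C 0 ⊆ C i := by
  induction i with
  | zero => exact subset_rfl
  | succ i ih => exact ih.trans (H.mono i)

lemma Tower.uτ (H : Tower M T f C τ F p q γ φ) (i : ℕ) : UniformContinuousOn τ (C i) :=
  (H.compact i).uniformContinuousOn_of_continuous (H.cτ i)

lemma Tower.up (H : Tower M T f C τ F p q γ φ) (i : ℕ) : UniformContinuousOn p (C i) :=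
  (H.compact i).uniformContinuousOn_of_continuous (H.cp i)

lemma Tower.exact (H : Tower M T f C τ F p q γ φ) (i m : ℕ) {c : List β → ZMod 2}
    (hc : D c =ᶠ[sm (C (i + 1)) (m + 1)] 0) (he : ∃ b, pull q c =ᶠ[sm M m] D b) :
    ∃ b, c =ᶠ[sm (C i) m] D b :=
  exact_of_deform (H.compact i) (H.up i) (H.mp i) F (H.cF i) (H.mF i) (H.F0 i) (H.F1 i) hc he

lemma Tower.exact_of_acyc (H : Tower M T f C τ F p q γ φ) (hM : IsCompact M) (i m : ℕ)
    (ha : Acyc M m) {c : List β → ZMod 2}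
    (hc : D c =ᶠ[sm (C (i + 1)) (m + 1)] 0) : ∃ b, c =ᶠ[sm (C i) m] D b := by
  refine H.exact i m hc (ha _ ?_)
  rw [D_pull]
  exact ev_pull (hM.uniformContinuousOn_of_continuous H.cq)
    (fun x hx => H.zero (i + 1) (H.mq hx)) hc

/-- If `z + τ z` is the coboundary of `z'`, then `z' + τ z'` is a cocycle. -/
lemma Tower.sum_cocycle (H : Tower M T f C τ F p q γ φ) {i m : ℕ} {z z' : List β → ZMod 2}
    (h : z + pull τ z =ᶠ[sm (C (i + 1)) m] D z') :
    D (z' + pull τ z') =ᶠ[sm (C i) m] 0 := by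
  have h1 := ev_pull (H.uτ i) (H.mτ i) h
  have h2 := h.filter_mono (sm_mono (H.mono i) m)
  have h3 : pull τ (pull τ z) =ᶠ[sm (C i) m] z := by
    rw [pull_pull]
    conv_rhs => rw [← pull_id z]
    exact pull_congr (fun x hx => H.ττ i x hx) z m
  rw [← D_pull] at h1
  filter_upwards [h1, h2, h3] with l a1 a2 a3
  simp only [pull_add, D_add, Pi.add_apply, Pi.zero_apply] at *
  grind

/-- Below the top degree the cocycles of `Tower.sum_cocycle` are exact, each time at the cost of two
stages of the tower, which produces the descending sequence of `Iter` after pullback along `φ`. The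
last obstruction is `0` because it can be computed on a fixed point `γ a`. -/
lemma Tower.iter (H : Tower M T f C τ F p q γ φ) (hM : IsCompact M) (hne : M.Nonempty) {k : ℕ}
    (hk : ∀ m ≤ k, Acyc M m) {z z' : List β → ZMod 2}
    (h : z + pull τ z =ᶠ[sm (C (2 * k + 1)) (k + 1)] D z') : Iter T M k (pull φ z') := by
  induction k generalizing z z' with
  | zero =>
    obtain ⟨a, ha⟩ := hne
    obtain ⟨ε, hε, h⟩ := h
    have := h [γ a] rfl ⟨by simpa using H.zero 1 (H.mγ ha), by simpa using hε⟩
    simp only [mem_ofPred_eq, Pi.add_apply, pull, List.map_cons, List.map_nil, H.τγ a ha, D,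
      two_mul_zero, add_zero] at this
    exact this.symm
  | succ k ih =>
    have h1 := H.sum_cocycle (i := 2 * k + 2) h
    obtain ⟨z'', hz⟩ := H.exact_of_acyc hM (2 * k + 1) (k + 1) (hk _ le_rfl) h1
    refine ⟨pull φ z'', ?_, ih (fun m hm => hk m (by omega)) hz⟩
    have h2 := ev_pull (hM.uniformContinuousOn_of_continuous H.cφ)
      (fun x hx => H.zero (2 * k + 1) (H.mφ hx)) hz
    have h3 : pull T (pull φ z') =ᶠ[sm M (k + 1)] pull φ (pull τ z') := by
      rw [pull_pull, pull_pull]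
      exact pull_congr (fun x hx => H.φT x hx) _ _
    rw [D_pull]
    filter_upwards [h2, h3] with l a1 a2
    simp only [pull_add, Pi.add_apply] at *
    rw [a2, add_comm, a1]

/-- There is no tower over a free involution `T` and a homeomorphism `f` of a compact set with the
cohomology of the `n`-sphere. If `u` is a top cocycle, `p^* u + τ^* p^* u` is exact, since it
vanishes on the fixed points `γ`. Hence `Tower.iter` and `Iter.split` write `f^* u` as
`t + T t + D t'`. As `D t` is invariant, `t` differs by an invariant cochain from a cocycle, so
`t + T t` is exact by `OneDim.sum`, and so is `f^* u`, which is absurd. -/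
theorem no_tower (H : Tower M T f C τ F p q γ φ) (hM : IsCompact M) (hne : M.Nonempty) {n : ℕ}
    (h1 : OneDim M (n + 1)) (h2 : ∀ m, m ≠ n + 1 → Acyc M m) (hT : Invol T M)
    (fT : ∀ x ∈ M, T x ≠ x) (hf : UniformContinuousOn f M) (hf' : MapsTo f M M)
    (hg : UniformContinuousOn g M) (hg' : MapsTo g M M) (hfg : ∀ x ∈ M, f (g x) = x) : False := by
  obtain ⟨χ, hχ⟩ := exists_sign (invol_id M).mt hT.mt (fun _ _ => rfl) hT.inv (fun _ _ => rfl) fT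
    (fun x hx => (fT x hx).symm)
  obtain ⟨u, hu, hun⟩ := h1.1
  refine hun ?_
  have hz : ∀ i, D (pull p u) =ᶠ[sm (C i) (n + 1 + 1)] 0 := fun i => by
    rw [D_pull]; exact ev_pull (H.up i) (H.mp i) hu
  have hz' : ∀ i, D (pull p u + pull τ (pull p u)) =ᶠ[sm (C i) (n + 1 + 1)] 0 := fun i => by
    have a := ev_pull (H.uτ i) (H.mτ i) (hz (i + 1))
    rw [← D_pull] at a
    rw [D_add]
    filter_upwards [hz i, a] with l a1 a2
    simp only [Pi.add_apply, a1, a2, Pi.zero_apply]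
    exact two_mul_zero 0
  obtain ⟨z', hz1⟩ : ∃ z', pull p u + pull τ (pull p u) =ᶠ[sm (C (2 * n + 1)) (n + 1)] D z' := by
    refine H.exact _ _ (hz' _) ?_
    obtain ⟨b, hb⟩ := homotopy (m := n + 1) (pull p u + pull τ (pull p u)) (hz' 1) hM
      (fun t x => F t (γ x))
      ((H.cF 0).comp (f := fun z : ℝ × X => (z.1, γ z.2))
        (continuousOn_fst.prodMk (H.cγ.comp continuousOn_snd fun x hx => hx.2))
        fun z hz => ⟨hz.1, H.mγ hz.2⟩)
      (fun t ht x hx => H.mF 0 t ht (H.mγ hx))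
    have e1 : pull (fun x => F 1 (γ x)) (pull p u + pull τ (pull p u)) =ᶠ[sm M (n + 1)]
        pull q (pull p u + pull τ (pull p u)) :=
      pull_congr (fun x hx => by
        rw [H.F1 0 _ (H.mγ hx), H.pγ x hx]) _ _
    have e2 : pull (fun x => F 0 (γ x)) (pull p u + pull τ (pull p u)) =ᶠ[sm M (n + 1)] 0 := by
      have e3 : pull (fun x => F 0 (γ x)) (pull τ (pull p u)) =ᶠ[sm M (n + 1)]
          pull (fun x => F 0 (γ x)) (pull p u) := by
        rw [pull_pull]
        exact pull_congr (fun x hx => by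
          change τ (F 0 (γ x)) = F 0 (γ x)
          rw [H.F0 0 _ (H.mγ hx), H.τγ x hx]) _ _
      filter_upwards [e3] with l a1
      rw [pull_add, Pi.add_apply, a1]; exact two_mul_zero _
    refine ⟨b, ?_⟩
    filter_upwards [hb, e1, e2] with l a1 a2 a3
    rw [← a2, ← a1, Pi.add_apply, a3, Pi.zero_apply, zero_add]
  have hit : Iter T M (n + 1) (pull f u) := by
    refine ⟨pull φ z', ?_, H.iter hM hne (fun m hm => h2 m (by omega)) hz1⟩
    have b1 := ev_pull (hM.uniformContinuousOn_of_continuous H.cφ)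
      (fun x hx => H.zero (2 * n + 1) (H.mφ hx)) hz1
    have b2 : pull φ (pull τ (pull p u)) =ᶠ[sm M (n + 1)] pull T (pull f u) := by
      rw [pull_pull, pull_pull, pull_pull]
      exact pull_congr (fun x hx => by
        change p (τ (φ x)) = f (T x)
        rw [← H.φT x hx, H.pφ _ (hT.mt hx)]) _ _
    have b3 : pull φ (pull p u) =ᶠ[sm M (n + 1)] pull f u := by
      rw [pull_pull]
      exact pull_congr (fun x hx => H.pφ x hx) _ _
    rw [D_pull]
    filter_upwards [b1, b2, b3] with l a1 a2 a3
    rw [← a1, pull_add, Pi.add_apply, Pi.add_apply, a2, a3, add_comm]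
  obtain ⟨t, t', ht⟩ := hit.split (fun x hx => (hχ x hx).2)
  have d1 : Inv T M (n + 1 + 1) (D t) := by
    have c1 := ev_D ht
    have c2 := ev_pull hf hf' hu
    rw [← D_pull] at c2
    unfold Inv
    rw [← D_pull]
    filter_upwards [c1, c2] with l a1 a2
    change D (pull f u) l = 0 at a2
    simp only [D_add, D_D, Pi.add_apply, Pi.zero_apply] at a1
    grind
  obtain ⟨s, hs, -, hds⟩ := invAcyc_single hM hT fT (m₀ := n + 1)
    (fun m hm => h2 (m + 1) (by omega)) le_rfl (D t) (by rw [D_D]) d1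
    (by unfold Inv; rw [pull_id])
  obtain ⟨r, hr⟩ := h1.sum hT.uc hT.mt hT.uc hT.mt hT.inv (c := t + s) (by
    filter_upwards [hds] with l a1
    simp only [D_add, Pi.add_apply, a1, two_mul_zero, Pi.zero_apply])
  have fin : pull f u =ᶠ[sm M (n + 1)] D (r + t') := by
    unfold Inv at hs
    filter_upwards [ht, hr, hs] with l a1 a2 a3
    simp only [D_add, pull_add, Pi.add_apply] at *
    grind
  refine ⟨pull g (r + t'), ?_⟩
  have e := ev_pull hg hg' fin
  rw [pull_pull, ← D_pull] at e
  refine EventuallyEq.trans ?_ e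
  conv_lhs => rw [← pull_id u]
  exact pull_congr (fun x hx => (hfg x hx).symm) _ _

end

/-! ### The deleted product of the sphere -/

/-- Compact stages exhausting what is needed of the deleted product: starting from `C₀`, each stage adds
the images of the previous one under `τ` and under the deformation `F`. -/
def stage (τ : β → β) (F : ℝ → β → β) (C₀ : Set β) : ℕ → Set β
  | 0 => C₀
  | i + 1 => (stage τ F C₀ i ∪ τ '' stage τ F C₀ i) ∪
      (fun z : ℝ × β => F z.1 z.2) '' (Icc 0 1 ×ˢ stage τ F C₀ i)

lemma stage_compact {τ : β → β} {F : ℝ → β → β} {C₀ U : Set β} (h0 : IsCompact C₀) (h0' : C₀ ⊆ U)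
    (hτ : ContinuousOn τ U) (hτ' : MapsTo τ U U)
    (hF : ContinuousOn (fun z : ℝ × β => F z.1 z.2) (Icc 0 1 ×ˢ U))
    (hF' : ∀ t ∈ Icc (0 : ℝ) 1, MapsTo (F t) U U) (i : ℕ) :
    IsCompact (stage τ F C₀ i) ∧ stage τ F C₀ i ⊆ U := by
  induction i with
  | zero => exact ⟨h0, h0'⟩
  | succ i ih =>
    obtain ⟨h1, h2⟩ := ih
    refine ⟨(h1.union (h1.image_of_continuousOn (hτ.mono h2))).union
      ((isCompact_Icc.prod h1).image_of_continuousOn (hF.mono (prod_mono_right h2))), ?_⟩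
    refine union_subset (union_subset h2 ?_) ?_
    · rintro _ ⟨x, hx, rfl⟩; exact hτ' (h2 hx)
    · rintro _ ⟨⟨t, x⟩, ⟨ht, hx⟩, rfl⟩; exact hF' t ht (h2 hx)

section Final

variable {V : Type*} [NormedAddCommGroup V] [InnerProductSpace ℝ V] [FiniteDimensional ℝ V]

/-- If `T f x ≠ f T x` for all `x`, then `φ x = (f x, T f T x)` maps the sphere to the deleted product
`U`, equivariantly for `τ (a, b) = (T b, T a)`. The antidiagonal `q` is a deformation retract of `U`,
and the graph `γ` of `T` consists of fixed points of `τ`: this is a tower. -/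
lemma exists_comm {n : ℕ} (hn : Module.finrank ℝ V = n + 1) {T f g : V → V}
    (hT : Invol T (SW (⊤ : Submodule ℝ V))) (fT : ∀ x ∈ SW (⊤ : Submodule ℝ V), T x ≠ x)
    (hf : ContinuousOn f (SW (⊤ : Submodule ℝ V)))
    (hf' : MapsTo f (SW (⊤ : Submodule ℝ V)) (SW (⊤ : Submodule ℝ V)))
    (hg : ContinuousOn g (SW (⊤ : Submodule ℝ V)))
    (hg' : MapsTo g (SW (⊤ : Submodule ℝ V)) (SW (⊤ : Submodule ℝ V)))
    (hfg : ∀ x ∈ SW (⊤ : Submodule ℝ V), f (g x) = x) :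
    ∃ x ∈ SW (⊤ : Submodule ℝ V), T (f x) = f (T x) := by
  by_contra! hc
  obtain ⟨hco1, hco2⟩ := sphere_cohomology (n + 1) (⊤ : Submodule ℝ V) (by rw [finrank_top, hn])
  have hM := isCompact_SW (⊤ : Submodule ℝ V)
  have hne : (SW (⊤ : Submodule ℝ V)).Nonempty := by
    have : Nontrivial V := Module.nontrivial_of_finrank_pos (R := ℝ) (by omega)
    obtain ⟨w, hw⟩ := exists_ne (0 : V)
    exact ⟨nrm w, trivial, norm_nrm hw⟩
  have memM : ∀ x : V, x ∈ SW (⊤ : Submodule ℝ V) ↔ ‖x‖ = 1 := fun x => by simp [SW]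
  generalize SW (⊤ : Submodule ℝ V) = M at *
  let U : Set (V × V) := {z | z.1 ∈ M ∧ z.2 ∈ M ∧ z.1 ≠ z.2}
  let τ : V × V → V × V := fun z => (T z.2, T z.1)
  let F : ℝ → V × V → V × V := fun t z => (z.1, nrm ((1 - t) • z.2 - t • z.1))
  let q : V → V × V := fun a => (a, -a)
  let γ : V → V × V := fun a => (a, T a)
  let φ : V → V × V := fun x => (f x, T (f (T x)))
  have cT := hT.uc.continuousOn
  have cq : ContinuousOn q M := by simp only [q]; fun_prop
  have cγ : ContinuousOn γ M := continuousOn_id.prodMk cT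
  have mfT : MapsTo (fun x => f (T x)) M M := fun x hx => hf' (hT.mt hx)
  have cfT : ContinuousOn (fun x => f (T x)) M := hf.comp cT hT.mt
  have cφ : ContinuousOn φ M := hf.prodMk (cT.comp cfT mfT)
  have key : ∀ t ∈ Icc (0 : ℝ) 1, ∀ z ∈ U, (1 - t) • z.2 - t • z.1 ≠ 0 := by
    rintro t ⟨ht0, ht1⟩ ⟨a, b⟩ ⟨ha, hb, hab⟩ h0
    simp only at *
    rw [memM] at ha hb
    rw [sub_eq_zero] at h0
    have h1 := congrArg norm h0
    rw [norm_smul, norm_smul, ha, hb, Real.norm_of_nonneg ht0,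
      Real.norm_of_nonneg (by linarith)] at h1
    have h2 : t = 1 / 2 := by linarith
    subst h2
    apply hab
    have h3 : (1 / 2 : ℝ) • b = (1 / 2 : ℝ) • a := by convert h0 using 2; norm_num
    exact (smul_right_injective V (by norm_num : (1 / 2 : ℝ) ≠ 0) h3).symm
  have mF : ∀ t ∈ Icc (0 : ℝ) 1, MapsTo (F t) U U := by
    intro t ht z hz
    have hk := key t ht z hz
    obtain ⟨ht0, ht1⟩ := ht
    obtain ⟨ha, hb, hab⟩ := hz
    obtain ⟨a, b⟩ := z
    simp only at *
    refine ⟨ha, (memM _).2 (norm_nrm hk), fun h => ?_⟩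
    change a = nrm ((1 - t) • b - t • a) at h
    set v := (1 - t) • b - t • a with hv
    rw [memM] at ha hb
    have hv1 : v = ‖v‖ • a := by
      conv_rhs => rw [h]
      rw [nrm, smul_smul, mul_inv_cancel₀ (norm_ne_zero_iff.2 hk), one_smul]
    have hv2 : (1 - t) • b = (‖v‖ + t) • a := by
      rw [add_smul, ← hv1, hv]; abel
    have h1 := congrArg norm hv2
    rw [norm_smul, norm_smul, ha, hb, Real.norm_of_nonneg (by linarith),
      Real.norm_of_nonneg (by positivity)] at h1
    have hp := norm_pos_iff.2 hk
    have h2 : ‖v‖ + t = 1 - t := by linarith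
    rw [h2] at hv2
    exact hab (smul_right_injective V (by linarith : (1 - t : ℝ) ≠ 0) hv2).symm
  have cF : ContinuousOn (fun z : ℝ × (V × V) => F z.1 z.2) (Icc 0 1 ×ˢ U) := by
    refine ContinuousOn.prodMk (by fun_prop) (continuousOn_nrm (by fun_prop) ?_)
    rintro ⟨t, z⟩ ⟨ht, hz⟩
    exact key t ht z hz
  have mτ : MapsTo τ U U := by
    rintro ⟨a, b⟩ ⟨ha, hb, hab⟩
    refine ⟨hT.mt hb, hT.mt ha, fun h => hab ?_⟩
    change T b = T a at h
    have := congrArg T h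
    rw [hT.inv _ hb, hT.inv _ ha] at this
    exact this.symm
  have cτ : ContinuousOn τ U :=
    (cT.comp continuousOn_snd fun z hz => hz.2.1).prodMk
      (cT.comp continuousOn_fst fun z hz => hz.1)
  let C₀ := φ '' M ∪ γ '' M ∪ q '' M
  have hC₀ : IsCompact C₀ := ((hM.image_of_continuousOn cφ).union
    (hM.image_of_continuousOn cγ)).union (hM.image_of_continuousOn cq)
  have hC₀U : C₀ ⊆ U := by
    refine union_subset (union_subset ?_ ?_) ?_
    · rintro _ ⟨x, hx, rfl⟩
      refine ⟨hf' hx, hT.mt (mfT hx), fun h => hc x hx ?_⟩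
      change f x = T (f (T x)) at h
      rw [h, hT.inv _ (mfT hx)]
    · rintro _ ⟨x, hx, rfl⟩
      exact ⟨hx, hT.mt hx, (fT x hx).symm⟩
    · rintro _ ⟨x, hx, rfl⟩
      refine ⟨hx, (memM _).2 ((norm_neg x).trans ((memM x).1 hx)), fun h => ?_⟩
      change x = -x at h
      have h2 : x = 0 := by
        have h3 : (2 : ℝ) • x = 0 := by rw [two_smul]; exact add_eq_zero_iff_eq_neg.2 h
        exact (smul_eq_zero.1 h3).resolve_left two_ne_zero
      have := (memM x).1 hx
      rw [h2, norm_zero] at this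
      exact one_ne_zero this.symm
  have hst := stage_compact hC₀ hC₀U cτ mτ cF mF
  have tower : Tower M T f (stage τ F C₀) τ F Prod.fst q γ φ :=
    { compact := fun i => (hst i).1
      mono := fun i => subset_union_left.trans subset_union_left
      cτ := fun i => cτ.mono (hst i).2
      mτ := fun i x hx => Or.inl (Or.inr ⟨x, hx, rfl⟩)
      ττ := fun i x hx => Prod.ext (hT.inv _ ((hst i).2 hx).1) (hT.inv _ ((hst i).2 hx).2.1)
      cF := fun i => cF.mono (prod_mono_right (hst i).2)
      mF := fun i t ht x hx => Or.inr ⟨(t, x), ⟨ht, hx⟩, rfl⟩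
      F0 := fun i x hx => by
        simp [F, nrm_of_norm ((memM _).1 ((hst i).2 hx).2.1)]
      F1 := fun i x hx => by
        have := (memM _).1 ((hst i).2 hx).1
        simp only [F, q, sub_self, zero_smul, one_smul, zero_sub]
        rw [nrm_of_norm (by rwa [norm_neg])]
      cp := fun i => continuousOn_fst
      mp := fun i x hx => ((hst i).2 hx).1
      cq := cq
      mq := fun x hx => Or.inr ⟨x, hx, rfl⟩
      cγ := cγ
      mγ := fun x hx => Or.inl (Or.inr ⟨x, hx, rfl⟩)
      pγ := fun x hx => rfl
      τγ := fun x hx => Prod.ext (hT.inv x hx) rfl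
      cφ := cφ
      mφ := fun x hx => Or.inl (Or.inl ⟨x, hx, rfl⟩)
      pφ := fun x hx => rfl
      φT := fun x hx => Prod.ext (hT.inv _ (mfT hx)).symm (by
        change T (f (T (T x))) = T (f x)
        rw [hT.inv x hx]) }
  exact no_tower tower hM hne hco1 hco2 hT fT (hM.uniformContinuousOn_of_continuous hf) hf'
    (hM.uniformContinuousOn_of_continuous hg) hg' hfg

end Final

section Ext

variable {V : Type*} [NormedAddCommGroup V]

open Classical in
/-- The extension of a self-map of the unit sphere by the identity, which allows working with
self-maps of the vector space that are only controlled on the sphere. -/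
noncomputable def ext (h : Metric.sphere (0 : V) 1 → Metric.sphere (0 : V) 1) : V → V :=
  fun x => if hx : x ∈ Metric.sphere (0 : V) 1 then h ⟨x, hx⟩ else x

lemma ext_coe (h : Metric.sphere (0 : V) 1 → Metric.sphere (0 : V) 1)
    (x : Metric.sphere (0 : V) 1) : ext h x = h x := by
  rw [ext, dif_pos x.2]

lemma continuousOn_ext {h : Metric.sphere (0 : V) 1 → Metric.sphere (0 : V) 1}
    (hh : Continuous h) : ContinuousOn (ext h) (Metric.sphere (0 : V) 1) := by
  rw [continuousOn_iff_continuous_domRestrict]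
  have : (Metric.sphere (0 : V) 1).domRestrict (ext h) = fun x => (h x : V) :=
    funext fun x => ext_coe h x
  rw [this]
  exact continuous_subtype_val.comp hh

end Ext

section Group

variable {V : Type*} [NormedAddCommGroup V] [InnerProductSpace ℝ V] [FiniteDimensional ℝ V]

omit [FiniteDimensional ℝ V] in
lemma SW_top : SW (⊤ : Submodule ℝ V) = Metric.sphere (0 : V) 1 := by
  ext x; simp [SW]

lemma invol_ext {h : Metric.sphere (0 : V) 1 → Metric.sphere (0 : V) 1}
    (hh : Continuous h) (hi : ∀ x, h (h x) = x) :
    Invol (Milnor.ext h) (SW (⊤ : Submodule ℝ V)) := by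
  have hM := isCompact_SW (⊤ : Submodule ℝ V)
  rw [SW_top] at *
  refine ⟨hM.uniformContinuousOn_of_continuous (continuousOn_ext hh), fun x hx => ?_,
    fun x hx => ?_⟩
  · rw [ext_coe h ⟨x, hx⟩]; exact (h _).2
  · rw [ext_coe h ⟨x, hx⟩, ext_coe, hi]

/-- Two commuting free involutions of the sphere agree somewhere. -/
lemma sphere_no_klein_four {n : ℕ} (hn : Module.finrank ℝ V = n + 1)
    {T S : Metric.sphere (0 : V) 1 → Metric.sphere (0 : V) 1} (hT : Continuous T)
    (hS : Continuous S) (iT : ∀ x, T (T x) = x) (iS : ∀ x, S (S x) = x)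
    (hTS : ∀ x, T (S x) = S (T x)) (fT : ∀ x, T x ≠ x) (fS : ∀ x, S x ≠ x)
    (fTS : ∀ x, T x ≠ S x) : False := by
  obtain ⟨hco1, hco2⟩ := sphere_cohomology (n + 1) (⊤ : Submodule ℝ V) (by rw [finrank_top, hn])
  have hM := isCompact_SW (⊤ : Submodule ℝ V)
  have hne : (SW (⊤ : Submodule ℝ V)).Nonempty := by
    have : Nontrivial V := Module.nontrivial_of_finrank_pos (R := ℝ) (by omega)
    obtain ⟨w, hw⟩ := exists_ne (0 : V)
    exact ⟨nrm w, trivial, norm_nrm hw⟩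
  refine no_klein_four hM hne hco1 hco2 (invol_ext hT iT) (invol_ext hS iS) ?_ ?_ ?_ ?_
  all_goals
    intro x hx
    rw [SW_top] at hx
    lift x to Metric.sphere (0 : V) 1 using hx
    simp only [ext_coe, hTS, ne_eq, Subtype.coe_inj, fT, fS, fTS, not_false_eq_true]

/-- Milnor's theorem on involutions: a free involution of the sphere and a homeomorphism commute at some
point. The homeomorphism enters through a right inverse `g` of `f` only. -/
lemma sphere_exists_comm {n : ℕ} (hn : Module.finrank ℝ V = n + 1)
    {T f g : Metric.sphere (0 : V) 1 → Metric.sphere (0 : V) 1} (hT : Continuous T)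
    (hf : Continuous f) (hg : Continuous g) (iT : ∀ x, T (T x) = x) (hfg : ∀ x, f (g x) = x)
    (fT : ∀ x, T x ≠ x) : ∃ x, T (f x) = f (T x) := by
  obtain ⟨x, hx, h⟩ := exists_comm hn (T := Milnor.ext T) (f := Milnor.ext f) (g := Milnor.ext g)
    (invol_ext hT iT)
    (by
      intro x hx
      rw [SW_top] at hx
      lift x to Metric.sphere (0 : V) 1 using hx
      simp only [ext_coe, ne_eq, Subtype.coe_inj, fT, not_false_eq_true])
    (by rw [SW_top]; exact continuousOn_ext hf)
    (by
      rw [SW_top]; intro x hx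
      lift x to Metric.sphere (0 : V) 1 using hx
      rw [ext_coe]; exact (f x).2)
    (by rw [SW_top]; exact continuousOn_ext hg)
    (by
      rw [SW_top]; intro x hx
      lift x to Metric.sphere (0 : V) 1 using hx
      rw [ext_coe]; exact (g x).2)
    (by
      rw [SW_top]; intro x hx
      lift x to Metric.sphere (0 : V) 1 using hx
      rw [ext_coe, ext_coe, hfg])
  rw [SW_top] at hx
  lift x to Metric.sphere (0 : V) 1 using hx
  simp only [ext_coe, Subtype.coe_inj] at h
  exact ⟨x, h⟩

end Group

end Milnor

/-- Milnor's theorem: if a finite group `G` acts freely and continuously on a sphere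
`Sⁿ`, then every subgroup of `G` of order `2p` (for `p` prime) is cyclic. -/
theorem milnor_two_p_condition (G : Type*) [Group G] [Finite G] (n : ℕ)
    (ρ : G →* (Metric.sphere (0 : EuclideanSpace ℝ (Fin (n + 1))) 1 ≃ₜ
        Metric.sphere (0 : EuclideanSpace ℝ (Fin (n + 1))) 1))
    (hfree : ∀ g : G, g ≠ 1 → ∀ x : Metric.sphere (0 : EuclideanSpace ℝ (Fin (n + 1))) 1,
        ρ g x ≠ x)
    (p : ℕ) (hp : p.Prime) (H : Subgroup G) (hH : Nat.card H = 2 * p) : IsCyclic H := by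
  have hmul : ∀ a b x, ρ (a * b) x = ρ a (ρ b x) := fun a b x => by rw [map_mul]; rfl
  have hone : ∀ x, ρ 1 x = x := fun x => by rw [map_one]; rfl
  have hinj : ∀ a b x, ρ a x = ρ b x → a = b := by
    intro a b x h
    by_contra hne
    refine hfree (b⁻¹ * a) (fun h1 => hne (inv_mul_eq_one.1 h1).symm) x ?_
    rw [hmul, h, ← hmul, inv_mul_cancel, hone]
  have hrank : Module.finrank ℝ (EuclideanSpace ℝ (Fin (n + 1))) = n + 1 := by simp
  have hinvol : ∀ t : G, t * t = 1 → ∀ x, ρ t (ρ t x) = x := fun t ht x => by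
    rw [← hmul, ht, hone]
  -- An element commutes with an involution as soon as the two actions commute at one point.
  have hcomm : ∀ t s : G, t ≠ 1 → t * t = 1 → t * s = s * t := by
    intro t s ht htt
    obtain ⟨x, hx⟩ := Milnor.sphere_exists_comm hrank (T := ρ t) (f := ρ s) (g := ρ s⁻¹)
      (ρ t).continuous (ρ s).continuous (ρ s⁻¹).continuous (hinvol t htt)
      (fun x => by rw [← hmul, mul_inv_cancel, hone]) (hfree t ht)
    exact hinj _ _ x (by rw [hmul, hmul, hx])
  rcases hp.eq_two_or_odd' with rfl | hodd
  · by_contra hcyc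
    have hsq : ∀ a : H, a * a = 1 := by
      intro a
      have hd : orderOf a ∣ 2 ^ 2 := by
        have h := orderOf_dvd_natCard a
        rw [hH] at h
        exact h
      obtain ⟨k, hk, hak⟩ := (Nat.dvd_prime_pow Nat.prime_two).1 hd
      have hk2 : k ≠ 2 := by
        rintro rfl
        exact hcyc (isCyclic_of_orderOf_eq_card a (by rw [hak, hH]; norm_num))
      rw [← pow_two, ← orderOf_dvd_iff_pow_eq_one, hak]
      exact pow_dvd_pow 2 (show k ≤ 1 by omega)
    have hcard : Fintype.card (Fin 3) ≤ Nat.card H := by rw [hH]; simp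
    -- Four elements leave room for two distinct ones besides `1`; by `hcomm` they commute, and
    -- `sphere_no_klein_four` applies.
    obtain ⟨e⟩ : Nonempty (Fin 3 ↪ H) := by
      have := Fintype.ofFinite H
      rw [Nat.card_eq_fintype_card] at hcard
      exact Function.Embedding.nonempty_of_card_le hcard
    obtain ⟨a, ha⟩ : ∃ a : H, a ≠ 1 := by
      have : Nontrivial H := ⟨e 0, e 1, fun h => by simpa using e.injective h⟩
      exact exists_ne 1
    obtain ⟨b, hb1, hba⟩ : ∃ b : H, b ≠ 1 ∧ b ≠ a := by
      by_contra! hc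
      have h' : ∀ b : H, b = 1 ∨ b = a := fun b => or_iff_not_imp_left.2 (hc b)
      have e01 : e 0 ≠ e 1 := fun h => by simpa using e.injective h
      have e02 : e 0 ≠ e 2 := fun h => by simpa using e.injective h
      have e12 : e 1 ≠ e 2 := fun h => by simpa using e.injective h
      rcases h' (e 0) with h0 | h0 <;> rcases h' (e 1) with h1 | h1 <;>
        rcases h' (e 2) with h2 | h2
      all_goals first
        | exact e01 (h0.trans h1.symm)
        | exact e02 (h0.trans h2.symm)
        | exact e12 (h1.trans h2.symm)
    have haG : (a : G) ≠ 1 := fun h => ha (Subtype.ext h)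
    have hbG : (b : G) ≠ 1 := fun h => hb1 (Subtype.ext h)
    have haa : (a : G) * a = 1 := congrArg Subtype.val (hsq a)
    have hbb : (b : G) * b = 1 := congrArg Subtype.val (hsq b)
    refine Milnor.sphere_no_klein_four hrank (ρ a).continuous (ρ b).continuous
      (hinvol a haa) (hinvol b hbb) (fun x => ?_) (hfree a haG) (hfree b hbG) (fun x h => ?_)
    · rw [← hmul, ← hmul, hcomm a b haG haa]
    · exact hba (Subtype.ext (hinj _ _ x h).symm)
  · have : Fact p.Prime := ⟨hp⟩
    -- Commuting elements of the coprime orders `2` and `p` have a product of order `2p`.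
    obtain ⟨t, ht⟩ := exists_prime_orderOf_dvd_card' (G := H) 2 (by rw [hH]; exact dvd_mul_right _ _)
    obtain ⟨s, hs⟩ := exists_prime_orderOf_dvd_card' (G := H) p (by rw [hH]; exact dvd_mul_left _ _)
    have htt : t * t = 1 := by rw [← pow_two, ← ht, pow_orderOf_eq_one]
    have ht1 : (t : G) ≠ 1 := fun h => by
      have : t = 1 := Subtype.ext h
      rw [this, orderOf_one] at ht
      exact absurd ht (by norm_num)
    have hts : Commute t s := Subtype.ext (hcomm t s ht1 (congrArg Subtype.val htt))
    refine isCyclic_of_orderOf_eq_card (t * s) ?_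
    rw [hts.orderOf_mul_eq_mul_orderOf_of_coprime, ht, hs, hH]
    rw [ht, hs]
    exact (Nat.coprime_two_left).2 hodd
end

section
/- Let p ≥ 5 be a prime and let SL_2(𝔽_p) denote the special linear group of 2×2 matrices of determinant 1 over the field with p elements. Then for every prime ℓ, every subgroup of SL_2(𝔽_p) of order ℓ^2 is cyclic; that is, SL_2(𝔽_p) satisfies the p^2-conditions for all primes and hence has periodic cohomology. -/
/-!
The subgroup `H` has order `ℓ ^ 2`, so it is abelian.

* If `ℓ = p`, then `p ^ 2` would divide `|GL₂(𝔽_p)| = (p² - 1)(p² - p)`, which is impossible.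
* If some `g ∈ H` has `(tr g)² ≠ 4`, its eigenvalues `x ≠ y` (in an algebraic closure `K`)
  satisfy `x + y = tr g`, `x y = 1`. The centralizer of `g` consists of matrices `a + b g`, and
  `a + b g ↦ a + b x` is an injective homomorphism from `H` to the multiplicative monoid of `K`
  (`isCyclic_of_commute`); finite subgroups of the units of a field are cyclic.
* Otherwise every `h ∈ H` has trace `±2`, so `±h` is unipotent and `h ^ p = ±1`
  (`pow_char_eq_or`). If `ℓ ≠ p`, then `h ↦ h ^ p` is injective on `H`, forcing `|H| ≤ 2`.
-/

open Matrix

/-- Cayley–Hamilton for `2 × 2` matrices of determinant one. -/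
lemma sq_eq_trace_smul_sub_one {F : Type*} [CommRing F] (g : SpecialLinearGroup (Fin 2) F) :
    (g : Matrix (Fin 2) (Fin 2) F) * g =
      (g : Matrix (Fin 2) (Fin 2) F).trace • (g : Matrix (Fin 2) (Fin 2) F) - 1 := by
  have hd := g.det_coe
  rw [det_fin_two] at hd
  ext i j
  fin_cases i <;> fin_cases j <;> simp [mul_apply, trace_fin_two] <;>
    first | ring1 | linear_combination -hd

/-- The centralizer of a matrix with distinct eigenvalues is spanned by `1` and that matrix. -/
lemma exists_eq_smul_add_smul {F : Type*} [Field F] (g : SpecialLinearGroup (Fin 2) F)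
    (hg : (g : Matrix (Fin 2) (Fin 2) F).trace ^ 2 ≠ 4) (h : SpecialLinearGroup (Fin 2) F)
    (hc : g * h = h * g) :
    ∃ a b : F, (h : Matrix (Fin 2) (Fin 2) F) = a • 1 + b • (g : Matrix (Fin 2) (Fin 2) F) := by
  have hd := g.det_coe
  rw [det_fin_two] at hd
  have hm : (g : Matrix (Fin 2) (Fin 2) F) * h = h * g := by
    simpa using congrArg (fun z : SpecialLinearGroup (Fin 2) F => (z : Matrix (Fin 2) (Fin 2) F)) hc
  rw [trace_fin_two] at hg
  have e00 := congrFun₂ hm 0 0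
  have e01 := congrFun₂ hm 0 1
  have e10 := congrFun₂ hm 1 0
  simp only [mul_apply, Fin.sum_univ_two] at e00 e01 e10
  -- It suffices to find `b` matching the off-diagonal entries and the diagonal difference.
  suffices ∃ b : F, h.1 0 1 = b * g.1 0 1 ∧ h.1 1 0 = b * g.1 1 0 ∧
      h.1 1 1 - h.1 0 0 = b * (g.1 1 1 - g.1 0 0) by
    obtain ⟨b, h1, h2, h3⟩ := this
    refine ⟨h.1 0 0 - b * g.1 0 0, b, ?_⟩
    ext i j
    fin_cases i <;> fin_cases j <;> simp
    · exact h1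
    · exact h2
    · linear_combination h3
  by_cases hq : g.1 0 1 = 0
  · by_cases hr : g.1 1 0 = 0
    · have hps : g.1 1 1 - g.1 0 0 ≠ 0 := by
        intro hz
        apply hg
        rw [hq] at hd
        linear_combination (g.1 1 1 - g.1 0 0) * hz + 4 * hd
      refine ⟨(h.1 1 1 - h.1 0 0) / (g.1 1 1 - g.1 0 0), ?_, ?_, ?_⟩
      · rw [hq, mul_zero]
        refine (mul_eq_zero.mp ?_).resolve_left hps
        rw [hq] at e01
        linear_combination -e01
      · rw [hr, mul_zero]
        refine (mul_eq_zero.mp ?_).resolve_left hps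
        rw [hr] at e10
        linear_combination e10
      · field_simp
    · refine ⟨h.1 1 0 / g.1 1 0, ?_, ?_, ?_⟩ <;> field_simp
      · linear_combination -e00
      · linear_combination -e10
  · refine ⟨h.1 0 1 / g.1 0 1, ?_, ?_, ?_⟩ <;> field_simp
    · linear_combination e00
    · linear_combination e01

/-- Evaluation at an eigenvalue of `g` embeds the abelian group `H` into a field. -/
lemma isCyclic_of_commute {F : Type*} [Field F] (H : Subgroup (SpecialLinearGroup (Fin 2) F))
    [Finite H] (g : SpecialLinearGroup (Fin 2) F)
    (hg : (g : Matrix (Fin 2) (Fin 2) F).trace ^ 2 ≠ 4) (hc : ∀ h ∈ H, g * h = h * g) :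
    IsCyclic H := by
  set t := (g : Matrix (Fin 2) (Fin 2) F).trace with ht
  let K := AlgebraicClosure F
  let φ : F →+* K := algebraMap F K
  have hφ : Function.Injective φ := φ.injective
  obtain ⟨x, hx⟩ : ∃ x : K, x ^ 2 - φ t * x + 1 = 0 := by
    have hp : (Polynomial.C 1 * Polynomial.X ^ 2 + Polynomial.C (-φ t) * Polynomial.X
        + Polynomial.C 1 : Polynomial K).degree ≠ 0 := by
      rw [Polynomial.degree_quadratic one_ne_zero]; decide
    obtain ⟨x, hx⟩ := IsAlgClosed.exists_root _ hp
    refine ⟨x, ?_⟩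
    simp [Polynomial.IsRoot] at hx
    linear_combination hx
  -- The other eigenvalue is `φ t - x`; the two are distinct.
  have hxy : x - (φ t - x) ≠ 0 := by
    intro h
    apply hg
    apply hφ
    rw [map_pow, map_ofNat]
    linear_combination (2 * x - φ t) * h - 4 * hx
  -- Coordinates with respect to `1, g` are unique, since `g` is not scalar.
  have huniq : ∀ a b a' b' : F, a • (1 : Matrix (Fin 2) (Fin 2) F) + b • g.1 = a' • 1 + b' • g.1 →
      a = a' ∧ b = b' := by
    intro a b a' b' h
    have e00 := congrFun₂ h 0 0
    have e01 := congrFun₂ h 0 1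
    have e11 := congrFun₂ h 1 1
    simp at e00 e01 e11
    have hb : b = b' := by
      by_contra hne
      have hb : b - b' ≠ 0 := sub_ne_zero.mpr hne
      have hd := g.det_coe
      rw [det_fin_two] at hd
      apply hg
      have hq : g.1 0 1 = 0 := e01.resolve_left hne
      have hps : g.1 0 0 - g.1 1 1 = 0 := by
        refine (mul_eq_zero.mp ?_).resolve_left hb
        linear_combination e00 - e11
      rw [ht, trace_fin_two]
      rw [hq] at hd
      linear_combination (g.1 0 0 - g.1 1 1) * hps + 4 * hd
    subst hb
    exact ⟨by simpa using e00, rfl⟩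
  choose a b hab using fun h : H => exists_eq_smul_add_smul g hg h.1 (hc h.1 h.2)
  have h1 := huniq (a 1) (b 1) 1 0 (by rw [← hab]; simp)
  have hmul : ∀ h k : H, a (h * k) = a h * a k - b h * b k ∧
      b (h * k) = a h * b k + b h * a k + b h * b k * t := by
    intro h k
    apply huniq
    rw [← hab]
    have hgg : g.1 * g.1 = t • g.1 - 1 := sq_eq_trace_smul_sub_one g
    have : ((h * k : H) : SpecialLinearGroup (Fin 2) F).1 = h.1.1 * k.1.1 := by simp
    rw [this, hab h, hab k]
    simp only [add_mul, mul_add, smul_mul_assoc, mul_smul_comm, one_mul, mul_one, hgg]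
    module
  let χ : H →* K :=
    { toFun := fun h => φ (a h) + φ (b h) * x
      map_one' := by simp [h1]
      map_mul' := by
        intro h k
        obtain ⟨h2, h3⟩ := hmul h k
        simp only [h2, h3, map_add, map_sub, map_mul]
        linear_combination -φ (b h) * φ (b k) * hx }
  refine isCyclic_of_injective_ringHom χ ?_
  refine (injective_iff_map_eq_one χ).mpr fun h hh => ?_
  change φ (a h) + φ (b h) * x = 1 at hh
  -- The determinant of `a + b g` is the product of its values at the two eigenvalues.
  have hdet : a h ^ 2 + a h * b h * t + b h ^ 2 = 1 := by
    have hd := g.det_coe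
    have hd' := h.1.det_coe
    rw [det_fin_two] at hd
    rw [hab h, det_fin_two] at hd'
    simp at hd'
    rw [ht, trace_fin_two]
    linear_combination hd' - (b h) ^ 2 * hd
  have hdet' := congrArg φ hdet
  simp only [map_add, map_mul, map_pow, map_one] at hdet'
  have hh' : φ (a h) + φ (b h) * (φ t - x) = 1 := by
    linear_combination hdet' - (φ (a h) + φ (b h) * (φ t - x)) * hh - φ (b h) ^ 2 * hx
  have hb0 : φ (b h) = 0 := by
    refine (mul_eq_zero.mp ?_).resolve_right hxy
    linear_combination hh - hh'
  have ha1 : φ (a h) = 1 := by simpa [hb0] using hh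
  have hb : b h = 0 := hφ (by simpa using hb0)
  have ha : a h = 1 := hφ (by simpa using ha1)
  apply Subtype.ext
  apply Subtype.ext
  rw [hab h, ha, hb]
  simp

/-- A matrix of trace `±2` and determinant one is `±` a unipotent matrix, so its `p`-th power is
`(±1) ^ p`. -/
lemma pow_char_eq_or {p : ℕ} [Fact p.Prime] (g : SpecialLinearGroup (Fin 2) (ZMod p))
    (hg : (g : Matrix (Fin 2) (Fin 2) (ZMod p)).trace ^ 2 = 4) :
    g.1 ^ p = 1 ∨ g.1 ^ p = (-1) ^ p := by
  have hp : 2 ≤ p := (Fact.out : p.Prime).two_le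
  have hCH := sq_eq_trace_smul_sub_one g
  -- A square-zero difference of commuting matrices dies under the Frobenius.
  have key : ∀ c : Matrix (Fin 2) (Fin 2) (ZMod p), Commute g.1 c → (g.1 - c) ^ 2 = 0 →
      g.1 ^ p = c ^ p := by
    intro c hc h0
    rw [← sub_eq_zero, ← sub_pow_char_of_commute p hc]
    exact pow_eq_zero_of_le hp h0
  have h4 : (g.1.trace - 2) * (g.1.trace + 2) = 0 := by linear_combination hg
  rcases mul_eq_zero.mp h4 with h | h
  · left
    rw [key 1 (Commute.one_right _), one_pow]
    rw [sub_eq_zero.mp h] at hCH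
    rw [sq, sub_mul, mul_sub, hCH, two_smul]
    simp
    abel
  · right
    refine key (-1) (Commute.one_right _).neg_right ?_
    rw [eq_neg_of_add_eq_zero_left h] at hCH
    rw [sq, sub_mul, mul_sub, hCH, neg_smul, two_smul]
    simp
    abel

lemma card_ne_char_sq {p : ℕ} (hp : p.Prime) (H : Subgroup (SpecialLinearGroup (Fin 2) (ZMod p))) :
    Nat.card H ≠ p ^ 2 := by
  have := Fact.mk hp
  intro hH
  have hinj : Function.Injective
      (SpecialLinearGroup.toGL : SpecialLinearGroup (Fin 2) (ZMod p) →* GL (Fin 2) (ZMod p)) :=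
    SpecialLinearGroup.toGL_injective
  have h1 : p ^ 2 ∣ Nat.card (GL (Fin 2) (ZMod p)) := by
    rw [← hH]
    exact (Subgroup.card_subgroup_dvd_card H).trans (Subgroup.card_dvd_of_injective _ hinj)
  rw [card_GL_field] at h1
  simp only [Fin.prod_univ_two, ZMod.card] at h1
  obtain ⟨k, rfl⟩ : ∃ k, p = k + 1 := ⟨p - 1, by have := hp.pos; omega⟩
  have e : ((k + 1) ^ 2 - (k + 1) ^ (0 : Fin 2).val) * ((k + 1) ^ 2 - (k + 1) ^ (1 : Fin 2).val)
      = (k + 1) * (k * (k * (k + 2))) := by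
    have e1 : (k + 1) ^ 2 - (k + 1) ^ (0 : Fin 2).val = k * (k + 2) := by
      rw [Fin.val_zero, pow_zero, Nat.sub_eq_iff_eq_add (Nat.one_le_pow 2 (k + 1) (by omega))]
      ring
    have e2 : (k + 1) ^ 2 - (k + 1) ^ (1 : Fin 2).val = k * (k + 1) := by
      simp; rw [Nat.sub_eq_iff_eq_add (by nlinarith)]; ring
    rw [e1, e2]; ring
  rw [e, sq, Nat.mul_dvd_mul_iff_left (Nat.succ_pos k)] at h1
  have hk : ¬ k + 1 ∣ k := fun h => by
    have := Nat.le_of_dvd (by have := hp.two_le; omega) h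
    omega
  rcases hp.dvd_mul.mp h1 with h | h
  · exact hk h
  · rcases hp.dvd_mul.mp h with h | h
    · exact hk h
    · have : k + 1 ∣ 1 := (Nat.dvd_add_right (dvd_refl (k + 1))).mp h
      exact hp.one_lt.ne' (Nat.dvd_one.mp this)


/-- For `p ≥ 5` prime, the group `SL₂(𝔽_p)` satisfies the `ℓ²`-conditions for all
primes `ℓ`: every subgroup of order `ℓ²` is cyclic. Hence `SL₂(𝔽_p)` has periodic
cohomology. -/
theorem SL2_satisfies_p_squared_conditions (p : ℕ) (hp : p.Prime) (hp5 : 5 ≤ p)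
    (ℓ : ℕ) (hℓ : ℓ.Prime)
    (H : Subgroup (Matrix.SpecialLinearGroup (Fin 2) (ZMod p)))
    (hH : Nat.card H = ℓ ^ 2) : IsCyclic H := by
  have := Fact.mk hp
  have := Fact.mk hℓ
  have hcomm : ∀ x y : H, x * y = y * x :=
    (IsPGroup.isMulCommutative_of_card_eq_prime_sq hH).is_comm.comm
  have hne : ℓ ≠ p := by
    rintro rfl
    exact card_ne_char_sq hp H hH
  by_cases hex : ∃ g ∈ H, (g : Matrix (Fin 2) (Fin 2) (ZMod p)).trace ^ 2 ≠ 4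
  · obtain ⟨g, hgH, hg⟩ := hex
    exact isCyclic_of_commute H g hg fun h hh =>
      congrArg Subtype.val (hcomm ⟨g, hgH⟩ ⟨h, hh⟩)
  · push Not at hex
    exfalso
    have hcop : (Nat.card H).Coprime p := by
      rw [hH]
      exact Nat.Coprime.pow_left 2 ((Nat.coprime_primes hℓ hp).mpr hne)
    -- The `p`-th power map takes at most two values on `H`, yet it is injective.
    have hinj : Function.Injective (fun h : H => h.1.1 ^ p) := by
      intro x y hxy
      apply (powCoprime hcop).injective
      apply Subtype.ext
      apply Subtype.ext
      simpa [powCoprime] using hxy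
    have hle : Nat.card H ≤ 2 := by
      rw [← Set.ncard_univ, ← Set.ncard_image_of_injective _ hinj]
      refine (Set.ncard_le_ncard (t := {1, (-1) ^ p}) ?_ (Set.toFinite _)).trans
        ((Set.ncard_insert_le _ _).trans (by simp))
      rintro _ ⟨h, -, rfl⟩
      exact pow_char_eq_or h.1 (hex h.1 h.2)
    rw [hH] at hle
    nlinarith [hℓ.two_le]
end
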